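/- arXiv:2407.17768 — 4 statements merged into one kernel-verified Lean document; each statement's English description precedes it below -/
import Mathlib

section
/- Let (S_t)_{t∈[0,T]} be a mean-continuous family of Ê-integrable random variables. Then the maps t ↦ L_t(S_t) and t ↦ U_t(S_t) are continuous on [0,T]. In particular, taking S ≡ 0, the maps t ↦ L_t(0) and t ↦ U_t(0) are continuous and bounded on [0,T]. -/
open MeasureTheory Set Filter

/-- The sublinear expectation `Ê[X] = sup_{P ∈ Ps} ∫ X dP`. -/
noncomputable def sublinE {Ω : Type*} [MeasurableSpace Ω] (Ps : Set (Measure Ω)) (X : Ω → ℝ) : ℝ :=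
  sSup ((fun P => ∫ ω, X ω ∂P) '' Ps)

/-- `X` is Ê-integrable: measurable, integrable w.r.t. each `P ∈ Ps`, and
`sup_{P ∈ Ps} ∫ |X| dP < ∞`. -/
def EIntegrable {Ω : Type*} [MeasurableSpace Ω] (Ps : Set (Measure Ω)) (X : Ω → ℝ) : Prop :=
  Measurable X ∧ (∀ P ∈ Ps, Integrable X P) ∧ ∃ M : ℝ, ∀ P ∈ Ps, (∫ ω, |X ω| ∂P) ≤ M

/-- Assumption (H_r) on the barriers `l, u` and the running loss function `hb`,
with constants `0 < cl ≤ cu` and `Ch > 0`. -/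
def HrAssumption {Ω : Type*} [MeasurableSpace Ω] (T cl cu Ch : ℝ)
    (l u : ℝ → ℝ) (hb : ℝ → Ω → ℝ → ℝ) : Prop :=
  0 < cl ∧ cl ≤ cu ∧ 0 < Ch ∧
  ContinuousOn l (Icc 0 T) ∧ ContinuousOn u (Icc 0 T) ∧
  (∃ M : ℝ, ∀ t ∈ Icc (0:ℝ) T, |l t| ≤ M ∧ |u t| ≤ M) ∧
  (∃ ε > 0, ∀ t ∈ Icc (0:ℝ) T, ε ≤ u t - l t) ∧
  (∀ t y, Measurable fun ω => hb t ω y) ∧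
  (∀ ε > 0, ∃ δ > 0, ∀ (ω : Ω) (t t' y y' : ℝ),
      |t - t'| + |y - y'| < δ → |hb t ω y - hb t' ω y'| < ε) ∧
  (∀ t ω, StrictMono (hb t ω)) ∧
  (∀ t ω y, |hb t ω y| ≤ Ch * (1 + |y|)) ∧
  (∀ t ω y y', cl * |y - y'| ≤ |hb t ω y - hb t ω y'| ∧
    |hb t ω y - hb t ω y'| ≤ cu * |y - y'|)

/-- `H̄(t, x, X) = Ê[hb(t, x + X − Ê[X])]`. -/
noncomputable def Hbar {Ω : Type*} [MeasurableSpace Ω] (Ps : Set (Measure Ω))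
    (hb : ℝ → Ω → ℝ → ℝ) (t x : ℝ) (X : Ω → ℝ) : ℝ :=
  sublinE Ps (fun ω => hb t ω (x + X ω - sublinE Ps X))

/-- A family `(S_t)_{t ∈ [0,T]}` of Ê-integrable random variables which is continuous in mean. -/
def MeanContinuous {Ω : Type*} [MeasurableSpace Ω] (Ps : Set (Measure Ω)) (T : ℝ)
    (S : ℝ → Ω → ℝ) : Prop :=
  (∀ t ∈ Icc (0:ℝ) T, EIntegrable Ps (S t)) ∧
  ∀ t ∈ Icc (0:ℝ) T,
    Tendsto (fun s => sublinE Ps fun ω => |S s ω - S t ω|) (nhdsWithin t (Icc 0 T)) (nhds 0)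

/-- The minimality (Skorokhod) condition in its equivalent increment form: `R` may only
increase on intervals where `φ` stays strictly below `u` and may only decrease on intervals
where `φ` stays strictly above `l`. -/
def MinimalityIncr (T : ℝ) (φ l u R : ℝ → ℝ) : Prop :=
  ∀ s t : ℝ, 0 ≤ s → s < t → t ≤ T →
    ((∀ v, s < v → v ≤ t → φ v < u v) → R s ≤ R t) ∧
    ((∀ v, s < v → v ≤ t → l v < φ v) → R t ≤ R s)

/-- `(Y, R)` solves the backward Skorokhod problem with sublinear expectation for the data
`(Ybar, hb, l, u)`. -/
def IsBSPsol {Ω : Type*} [MeasurableSpace Ω] (Ps : Set (Measure Ω)) (T : ℝ)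
    (hb : ℝ → Ω → ℝ → ℝ) (l u : ℝ → ℝ) (Ybar Y : ℝ → Ω → ℝ) (R : ℝ → ℝ) : Prop :=
  (∀ t ∈ Icc (0:ℝ) T, ∀ ω, Y t ω = Ybar t ω + R T - R t) ∧
  (∀ t ∈ Icc (0:ℝ) T, l t ≤ sublinE Ps (fun ω => hb t ω (Y t ω)) ∧
    sublinE Ps (fun ω => hb t ω (Y t ω)) ≤ u t) ∧
  ContinuousOn R (Icc 0 T) ∧ BoundedVariationOn R (Icc 0 T) ∧ R 0 = 0 ∧
  MinimalityIncr T (fun v => sublinE Ps (fun ω => hb v ω (Y v ω))) l u R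

lemma sublinE_le_aux {Ω : Type*} [MeasurableSpace Ω] {Ps : Set (Measure Ω)} (hPs : Ps.Nonempty)
    {X Y : Ω → ℝ} (hY : EIntegrable Ps Y) (D : ℝ)
    (h : ∀ P ∈ Ps, ∫ ω, X ω ∂P ≤ (∫ ω, Y ω ∂P) + D) : sublinE Ps X ≤ sublinE Ps Y + D := by
  obtain ⟨_, _, M, hM⟩ := hY
  refine csSup_le (hPs.image _) ?_
  rintro _ ⟨P, hP, rfl⟩
  refine (h P hP).trans ?_
  have : ∫ ω, Y ω ∂P ≤ sublinE Ps Y := by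
    refine le_csSup ⟨M, ?_⟩ ⟨P, hP, rfl⟩
    rintro _ ⟨Q, hQ, rfl⟩
    exact (le_abs_self _).trans ((abs_integral_le_integral_abs).trans (hM Q hQ))
  linarith

lemma integral_le_sublinE {Ω : Type*} [MeasurableSpace Ω] {Ps : Set (Measure Ω)}
    {Y : Ω → ℝ} (hY : EIntegrable Ps Y) {P : Measure Ω} (hP : P ∈ Ps) :
    ∫ ω, Y ω ∂P ≤ sublinE Ps Y := by
  obtain ⟨_, _, M, hM⟩ := hY
  refine le_csSup ⟨M, ?_⟩ ⟨P, hP, rfl⟩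
  rintro _ ⟨Q, hQ, rfl⟩
  exact (le_abs_self _).trans ((abs_integral_le_integral_abs).trans (hM Q hQ))

lemma EIntegrable.abs_sub {Ω : Type*} [MeasurableSpace Ω] {Ps : Set (Measure Ω)}
    {X Y : Ω → ℝ} (hX : EIntegrable Ps X) (hY : EIntegrable Ps Y) :
    EIntegrable Ps (fun ω => |X ω - Y ω|) := by
  obtain ⟨mX, iX, M, hM⟩ := hX
  obtain ⟨mY, iY, N, hN⟩ := hY
  refine ⟨(mX.sub mY).abs, fun P hP => ((iX P hP).sub (iY P hP)).abs, M + N, fun P hP => ?_⟩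
  calc ∫ ω, |(|X ω - Y ω|)| ∂P ≤ ∫ ω, (|X ω| + |Y ω|) ∂P := by
        refine integral_mono ((iX P hP).sub (iY P hP)).abs.abs
          ((iX P hP).abs.add (iY P hP).abs) (fun ω => ?_)
        simp only [abs_abs]
        exact _root_.abs_sub (X ω) (Y ω)
    _ = (∫ ω, |X ω| ∂P) + ∫ ω, |Y ω| ∂P := integral_add (iX P hP).abs (iY P hP).abs
    _ ≤ M + N := add_le_add (hM P hP) (hN P hP)

lemma EIntegrable.loss {Ω : Type*} [MeasurableSpace Ω] {Ps : Set (Measure Ω)}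
    (hprob : ∀ P ∈ Ps, IsProbabilityMeasure P) {f : Ω → ℝ → ℝ} {Ch cu : ℝ} (hCh : 0 < Ch)
    (hm : ∀ y, Measurable fun ω => f ω y)
    (hg : ∀ ω y, |f ω y| ≤ Ch * (1 + |y|))
    (hlip : ∀ ω y y', |f ω y - f ω y'| ≤ cu * |y - y'|)
    {X : Ω → ℝ} (hX : EIntegrable Ps X) (x c : ℝ) :
    EIntegrable Ps (fun ω => f ω (x + X ω - c)) := by
  obtain ⟨mX, iX, M, hM⟩ := hX
  have hc : ∀ ω, Continuous (f ω) := fun ω => by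
    refine (LipschitzWith.of_dist_le_mul (K := Real.toNNReal cu) fun y y' => ?_).continuous
    rw [Real.dist_eq, Real.dist_eq]
    exact (hlip ω y y').trans
      (mul_le_mul_of_nonneg_right (Real.le_coe_toNNReal cu) (abs_nonneg _))
  have hmeas : Measurable (fun ω => f ω (x + X ω - c)) := by
    have h1 := measurable_uncurry_of_continuous_of_measurable (u := fun y ω => f ω y) hc hm
    exact h1.comp (((mX.const_add x).sub_const c).prodMk measurable_id)
  have hb : ∀ ω, |f ω (x + X ω - c)| ≤ Ch * (1 + |x - c|) + Ch * |X ω| := fun ω => by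
    have h1 := hg ω (x + X ω - c)
    have h2 : |x + X ω - c| ≤ |x - c| + |X ω| := by
      have := abs_add_le (x - c) (X ω)
      rwa [show x - c + X ω = x + X ω - c by ring] at this
    nlinarith
  have hi : ∀ P ∈ Ps, Integrable (fun ω => Ch * (1 + |x - c|) + Ch * |X ω|) P := fun P hP => by
    have := hprob P hP
    exact (integrable_const _).add ((iX P hP).abs.const_mul Ch)
  have hi2 : ∀ P ∈ Ps, Integrable (fun ω => f ω (x + X ω - c)) P := fun P hP =>
    (hi P hP).mono' hmeas.aestronglyMeasurable (Eventually.of_forall hb)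
  refine ⟨hmeas, hi2, Ch * (1 + |x - c|) + Ch * M, fun P hP => ?_⟩
  have := hprob P hP
  refine (integral_mono (hi2 P hP).abs (hi P hP) hb).trans ?_
  rw [integral_add (integrable_const _) ((iX P hP).abs.const_mul Ch),
    integral_const_mul Ch (fun ω => |X ω|)]
  simp only [integral_const, probReal_univ, one_smul]
  have := mul_le_mul_of_nonneg_left (hM P hP) hCh.le
  linarith

lemma sublinE_abs_sub_comm {Ω : Type*} [MeasurableSpace Ω] (Ps : Set (Measure Ω))
    (X Y : Ω → ℝ) : sublinE Ps (fun ω => |X ω - Y ω|) = sublinE Ps (fun ω => |Y ω - X ω|) := by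
  simp only [abs_sub_comm]

/-- pointwise comparison of integrands gives comparison of sublinear expectations -/
lemma sublinE_le_of_pointwise {Ω : Type*} [MeasurableSpace Ω] {Ps : Set (Measure Ω)}
    (hPs : Ps.Nonempty) (hprob : ∀ P ∈ Ps, IsProbabilityMeasure P)
    {X Y Z : Ω → ℝ} (hX : EIntegrable Ps X) (hY : EIntegrable Ps Y) (hZ : EIntegrable Ps Z)
    (D k : ℝ) (hk : 0 ≤ k) (h : ∀ ω, X ω ≤ Y ω + (D + k * Z ω)) :
    sublinE Ps X ≤ sublinE Ps Y + (D + k * sublinE Ps Z) := by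
  refine sublinE_le_aux hPs hY _ fun P hP => ?_
  have := hprob P hP
  have i1 : Integrable (fun ω => k * Z ω) P := (hZ.2.1 P hP).const_mul k
  have i2 : Integrable (fun ω => D + k * Z ω) P := (integrable_const D).add i1
  have h1 := integral_mono (hX.2.1 P hP) ((hY.2.1 P hP).add i2) h
  simp only [Pi.add_apply] at h1
  rw [integral_add (hY.2.1 P hP) i2, integral_add (integrable_const D) i1,
    integral_const_mul] at h1
  simp only [integral_const, probReal_univ, one_smul] at h1
  have h2 := mul_le_mul_of_nonneg_left (integral_le_sublinE hZ hP) hk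
  linarith

lemma EIntegrable.zero {Ω : Type*} [MeasurableSpace Ω] (Ps : Set (Measure Ω)) :
    EIntegrable Ps (fun _ => 0) :=
  ⟨measurable_const, fun _ _ => integrable_zero _ _ _, 0, fun P _ => by simp⟩

lemma sublinE_zero {Ω : Type*} [MeasurableSpace Ω] {Ps : Set (Measure Ω)} (hPs : Ps.Nonempty) :
    sublinE Ps (fun _ => 0) = 0 := by
  simp [sublinE, hPs.image_const]

lemma continuousOn_solution {Ω : Type*} [MeasurableSpace Ω] (T cl cu Ch : ℝ)
    (Ps : Set (Measure Ω)) (hPs : Ps.Nonempty) (hprob : ∀ P ∈ Ps, IsProbabilityMeasure P)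
    (l u : ℝ → ℝ) (hb : ℝ → Ω → ℝ → ℝ) (hHr : HrAssumption T cl cu Ch l u hb)
    (g x : ℝ → ℝ) (hg : ContinuousOn g (Icc 0 T))
    (S : ℝ → Ω → ℝ) (hS : MeanContinuous Ps T S)
    (hx : ∀ t ∈ Icc (0:ℝ) T, Hbar Ps hb t (x t) (S t) = g t) :
    ContinuousOn x (Icc 0 T) := by
  obtain ⟨hcl, hclu, hCh, -, -, -, -, hm, huc, hmono, hgr, hlip⟩ := hHr
  obtain ⟨hSi, hSc⟩ := hS
  have hcu : 0 ≤ cu := hcl.le.trans hclu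
  have hI : ∀ t y c {X : Ω → ℝ}, EIntegrable Ps X →
      EIntegrable Ps (fun ω => hb t ω (y + X ω - c)) := fun t y c X hX =>
    hX.loss hprob hCh (hm t) (hgr t) (fun ω a b => (hlip t ω a b).2) y c
  have h0 := EIntegrable.zero Ps
  have e0 := sublinE_zero hPs
  -- lower bound in x
  have low : ∀ t y y' (X : Ω → ℝ), EIntegrable Ps X → y' ≤ y →
      cl * (y - y') ≤ Hbar Ps hb t y X - Hbar Ps hb t y' X := by
    intro t y y' X hX hy
    have := sublinE_le_of_pointwise hPs hprob (hI t y' (sublinE Ps X) hX)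
      (hI t y (sublinE Ps X) hX) h0 (-(cl * (y - y'))) 0 le_rfl (fun ω => by
        have h1 := (hlip t ω (y + X ω - sublinE Ps X) (y' + X ω - sublinE Ps X)).1
        have h2 : hb t ω (y' + X ω - sublinE Ps X) ≤ hb t ω (y + X ω - sublinE Ps X) :=
          (hmono t ω).monotone (by linarith)
        rw [abs_of_nonneg (sub_nonneg.2 h2), abs_of_nonneg (by linarith)] at h1
        linarith)
    unfold Hbar
    linarith
  have low' : ∀ t y y' (X : Ω → ℝ), EIntegrable Ps X →
      cl * |y - y'| ≤ |Hbar Ps hb t y X - Hbar Ps hb t y' X| := by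
    intro t y y' X hX
    rcases le_total y' y with h | h
    · rw [abs_of_nonneg (sub_nonneg.2 h)]
      exact (low t y y' X hX h).trans (le_abs_self _)
    · rw [abs_sub_comm, abs_of_nonneg (sub_nonneg.2 h), abs_sub_comm]
      exact (low t y' y X hX h).trans (le_abs_self _)
  -- Lipschitz in X
  have exp1 : ∀ X Y : Ω → ℝ, EIntegrable Ps X → EIntegrable Ps Y →
      sublinE Ps X ≤ sublinE Ps Y + sublinE Ps (fun ω => |X ω - Y ω|) := by
    intro X Y hX hY
    have := sublinE_le_of_pointwise hPs hprob hX hY (hX.abs_sub hY) 0 1 zero_le_one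
      (fun ω => by linarith [le_abs_self (X ω - Y ω)])
    linarith
  have lipX1 : ∀ t y (X Y : Ω → ℝ), EIntegrable Ps X → EIntegrable Ps Y →
      Hbar Ps hb t y X ≤ Hbar Ps hb t y Y + 2 * cu * sublinE Ps (fun ω => |X ω - Y ω|) := by
    intro t y X Y hX hY
    set d := sublinE Ps (fun ω => |X ω - Y ω|) with hd
    have hE : |sublinE Ps X - sublinE Ps Y| ≤ d := by
      have a := exp1 X Y hX hY
      have b := exp1 Y X hY hX
      rw [sublinE_abs_sub_comm] at b
      rw [abs_le]
      constructor <;> linarith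
    have := sublinE_le_of_pointwise hPs hprob (hI t y (sublinE Ps X) hX)
      (hI t y (sublinE Ps Y) hY) (hX.abs_sub hY) (cu * d) cu hcu (fun ω => by
        have h1 := (hlip t ω (y + X ω - sublinE Ps X) (y + Y ω - sublinE Ps Y)).2
        have h2 : |(y + X ω - sublinE Ps X) - (y + Y ω - sublinE Ps Y)| ≤ |X ω - Y ω| + d := by
          rw [show (y + X ω - sublinE Ps X) - (y + Y ω - sublinE Ps Y)
            = (X ω - Y ω) - (sublinE Ps X - sublinE Ps Y) by ring]
          exact (abs_sub _ _).trans (by linarith)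
        have h3 := mul_le_mul_of_nonneg_left h2 hcu
        have h4 := le_abs_self (hb t ω (y + X ω - sublinE Ps X) - hb t ω (y + Y ω - sublinE Ps Y))
        linarith)
    unfold Hbar
    linarith
  -- time continuity
  have time : ∀ ε > 0, ∃ δ > 0, ∀ s t y (X : Ω → ℝ), EIntegrable Ps X → |s - t| < δ →
      Hbar Ps hb s y X ≤ Hbar Ps hb t y X + ε := by
    intro ε hε
    obtain ⟨δ, hδ, h⟩ := huc ε hε
    refine ⟨δ, hδ, fun s t y X hX hst => ?_⟩
    have := sublinE_le_of_pointwise hPs hprob (hI s y (sublinE Ps X) hX)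
      (hI t y (sublinE Ps X) hX) h0 ε 0 le_rfl (fun ω => by
        have h1 := h ω s t (y + X ω - sublinE Ps X) (y + X ω - sublinE Ps X) (by simpa using hst)
        have h2 := (abs_lt.1 h1).2
        linarith)
    unfold Hbar
    linarith
  intro t ht
  rw [ContinuousWithinAt, Metric.tendsto_nhds]
  intro ε hε
  have hη : 0 < cl * ε / 4 := by positivity
  obtain ⟨δ, hδ, htime⟩ := time _ hη
  have hgt := Metric.tendsto_nhds.1 (hg t ht) _ hη
  have hd : Tendsto (fun s => 2 * cu * sublinE Ps fun ω => |S s ω - S t ω|)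
      (nhdsWithin t (Icc 0 T)) (nhds 0) := by
    simpa using (hSc t ht).const_mul (2 * cu)
  have hd' := hd.eventually_lt_const hη
  have hn : ∀ᶠ s in nhdsWithin t (Icc 0 T), |s - t| < δ :=
    nhdsWithin_le_nhds (Metric.ball_mem_nhds t hδ)
  filter_upwards [hgt, hd', hn, self_mem_nhdsWithin] with s h1 h2 h3 hs
  rw [Real.dist_eq] at h1 ⊢
  have k0 := low' s (x s) (x t) (S s) (hSi s hs)
  have k1 := lipX1 s (x t) (S s) (S t) (hSi s hs) (hSi t ht)
  have k2 := lipX1 s (x t) (S t) (S s) (hSi t ht) (hSi s hs)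
  rw [sublinE_abs_sub_comm] at k2
  have k3 := htime s t (x t) (S t) (hSi t ht) h3
  have k4 := htime t s (x t) (S t) (hSi t ht) (by rwa [abs_sub_comm])
  rw [hx t ht] at k3 k4
  rw [hx s hs] at k0
  obtain ⟨h1a, h1b⟩ := abs_lt.1 h1
  have k5 : |g s - Hbar Ps hb s (x t) (S s)| < cl * ε := by
    rw [abs_lt]
    constructor <;> linarith
  exact lt_of_mul_lt_mul_left (k0.trans_lt k5) hcl.le

/-- If `(S_t)` is mean-continuous, then `t ↦ L_t(S_t)` and `t ↦ U_t(S_t)` are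
continuous on `[0,T]`; in particular `t ↦ L_t(0)` and `t ↦ U_t(0)` are continuous and bounded. -/
theorem stmt3 {Ω : Type*} [MeasurableSpace Ω] (T cl cu Ch : ℝ) (hT : 0 < T)
    (Ps : Set (Measure Ω)) (hPs : Ps.Nonempty) (hprob : ∀ P ∈ Ps, IsProbabilityMeasure P)
    (l u : ℝ → ℝ) (hb : ℝ → Ω → ℝ → ℝ) (hHr : HrAssumption T cl cu Ch l u hb)
    (L U : ℝ → (Ω → ℝ) → ℝ)
    (hL : ∀ t ∈ Icc (0:ℝ) T, ∀ X : Ω → ℝ, EIntegrable Ps X → Hbar Ps hb t (L t X) X = l t)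
    (hU : ∀ t ∈ Icc (0:ℝ) T, ∀ X : Ω → ℝ, EIntegrable Ps X → Hbar Ps hb t (U t X) X = u t)
    (S : ℝ → Ω → ℝ) (hS : MeanContinuous Ps T S) :
    ContinuousOn (fun t => L t (S t)) (Icc 0 T) ∧
    ContinuousOn (fun t => U t (S t)) (Icc 0 T) ∧
    ContinuousOn (fun t => L t (fun _ => 0)) (Icc 0 T) ∧
    ContinuousOn (fun t => U t (fun _ => 0)) (Icc 0 T) ∧
    ∃ M : ℝ, ∀ t ∈ Icc (0:ℝ) T, |L t (fun _ => 0)| ≤ M ∧ |U t (fun _ => 0)| ≤ M := by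
  have hl := hHr.2.2.2.1
  have hu := hHr.2.2.2.2.1
  have hZ : MeanContinuous Ps T (fun (_ : ℝ) (_ : Ω) => (0 : ℝ)) := by
    refine ⟨fun _ _ => EIntegrable.zero Ps, fun t _ => ?_⟩
    simp only [sub_self, abs_zero, sublinE_zero hPs]
    exact tendsto_const_nhds
  have key := continuousOn_solution T cl cu Ch Ps hPs hprob l u hb hHr
  have c1 := key l (fun t => L t (fun _ => 0)) hl _ hZ
    (fun t ht => hL t ht _ (EIntegrable.zero Ps))
  have c2 := key u (fun t => U t (fun _ => 0)) hu _ hZ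
    (fun t ht => hU t ht _ (EIntegrable.zero Ps))
  refine ⟨key l _ hl S hS (fun t ht => hL t ht _ (hS.1 t ht)),
    key u _ hu S hS (fun t ht => hU t ht _ (hS.1 t ht)), c1, c2, ?_⟩
  obtain ⟨A, hA⟩ := isCompact_Icc.exists_bound_of_continuousOn c1
  obtain ⟨B, hB⟩ := isCompact_Icc.exists_bound_of_continuousOn c2
  exact ⟨max A B, fun t ht => ⟨(hA t ht).trans (le_max_left _ _),
    (hB t ht).trans (le_max_right _ _)⟩⟩
end

section
/- Let (Ȳ_t)_{t∈[0,T]} be a mean-continuous family of Ê-integrable random variables with l_T ≤ Ê[ħ(T, Ȳ_T)] ≤ u_T, and let (Y, R) = BSP̂_l^u(Ȳ, ħ) be the unique solution of the backward Skorokhod problem with sublinear expectation. Then for every t ∈ [0,T]: R_T − R_t = −max{ (Ê[Ȳ_T] − U_T(Ȳ_T))⁺ ∧ inf_{t≤v≤T}(Ê[Ȳ_v] − L_v(Ȳ_v)), sup_{t≤s≤T}[ (Ê[Ȳ_s] − U_s(Ȳ_s)) ∧ inf_{t≤v≤s}(Ê[Ȳ_v] − L_v(Ȳ_v)) ] }.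 -/
open MeasureTheory Set Filter

theorem sk_lower (T : ℝ) (k b : ℝ → ℝ) (hk : ContinuousOn k (Icc 0 T))
    (hmin : ∀ s t, 0 ≤ s → s < t → t ≤ T → (∀ v, s < v → v ≤ t → k v < b v) → k t ≤ k s)
    {t s m : ℝ} (ht : 0 ≤ t) (hts : t ≤ s) (hs : s ≤ T) (hm : ∀ v ∈ Icc t s, m ≤ b v) :
    min (k s) m ≤ k t := by
  by_contra hcon
  rw [not_le, lt_min_iff] at hcon
  obtain ⟨h1, h2⟩ := hcon
  have hsub : Icc t s ⊆ Icc 0 T := Icc_subset_Icc ht hs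
  have hcl : IsClosed (Icc t s ∩ k ⁻¹' Iic (k t)) :=
    (hk.mono hsub).preimage_isClosed_of_isClosed isClosed_Icc isClosed_Iic
  have hcomp : IsCompact (Icc t s ∩ k ⁻¹' Iic (k t)) :=
    isCompact_Icc.of_isClosed_subset hcl inter_subset_left
  obtain ⟨σ, hσ, hmax⟩ := hcomp.exists_isGreatest ⟨t, ⟨le_refl t, hts⟩, le_refl (k t)⟩
  obtain ⟨⟨hσ1, hσ2⟩, hσ3⟩ := hσ
  simp only [mem_preimage, mem_Iic] at hσ3
  have hσs : σ < s := by
    rcases hσ2.lt_or_eq with h | h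
    · exact h
    · subst h; linarith
  have hc := hk σ (hsub ⟨hσ1, hσ2⟩)
  obtain ⟨δ, hδ, hd⟩ := Metric.continuousWithinAt_iff.1 hc (m - k t) (by linarith)
  have hr1 : σ < min s (σ + δ / 2) := lt_min hσs (by linarith)
  have hr2 : min s (σ + δ / 2) ≤ s := min_le_left _ _
  have hr3 : min s (σ + δ / 2) ≤ σ + δ / 2 := min_le_right _ _
  generalize min s (σ + δ / 2) = r at *
  have hkr := hmin σ r (by linarith) hr1 (by linarith) (by
    intro v hv1 hv2
    have hv : v ∈ Icc t s := ⟨by linarith, by linarith⟩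
    have := hd (hsub hv) (by rw [Real.dist_eq, abs_of_pos] <;> linarith)
    rw [Real.dist_eq] at this
    have := (abs_lt.1 this).2
    have := hm v hv
    linarith)
  have : r ≤ σ := hmax ⟨⟨by linarith, hr2⟩, show k r ≤ k t by linarith⟩
  linarith

theorem sk_formula (T : ℝ) (k a b : ℝ → ℝ) (hk : ContinuousOn k (Icc 0 T))
    (ha : ∀ t ∈ Icc 0 T, a t ≤ k t) (hb : ∀ t ∈ Icc 0 T, k t ≤ b t) (hkT : k T = 0)
    (hmin : ∀ s t, 0 ≤ s → s < t → t ≤ T → (∀ v, s < v → v ≤ t → k v < b v) → k t ≤ k s)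
    (hmin' : ∀ s t, 0 ≤ s → s < t → t ≤ T → (∀ v, s < v → v ≤ t → a v < k v) → k s ≤ k t)
    (t : ℝ) (ht : t ∈ Icc 0 T) :
    k t = max (min (max (a T) 0) (sInf (b '' Icc t T)))
      (sSup ((fun s => min (a s) (sInf (b '' Icc t s))) '' Icc t T)) := by
  obtain ⟨ht0, htT⟩ := ht
  have haT : max (a T) 0 = 0 := by
    have := ha T ⟨by linarith, le_refl T⟩
    exact max_eq_right (by linarith)
  rw [haT]
  obtain ⟨B, hB⟩ := isCompact_Icc.bddBelow_image hk
  have hbdd : ∀ s, s ≤ T → BddBelow (b '' Icc t s) := by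
    intro s hs
    refine ⟨B, ?_⟩
    rintro _ ⟨v, hv, rfl⟩
    have hv' : v ∈ Icc 0 T := ⟨by linarith [hv.1], by linarith [hv.2]⟩
    exact (hB ⟨v, hv', rfl⟩).trans (hb v hv')
  have hinf : ∀ s, s ≤ T → ∀ v ∈ Icc t s, sInf (b '' Icc t s) ≤ b v :=
    fun s hs v hv => csInf_le (hbdd s hs) ⟨v, hv, rfl⟩
  have hlow : ∀ s ∈ Icc t T, min (k s) (sInf (b '' Icc t s)) ≤ k t :=
    fun s hs => sk_lower T k b hk hmin ht0 hs.1 hs.2 (hinf s hs.2)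
  have hlowa : ∀ s ∈ Icc t T, min (a s) (sInf (b '' Icc t s)) ≤ k t :=
    fun s hs => (min_le_min_right _ (ha s ⟨ht0.trans hs.1, hs.2⟩)).trans (hlow s hs)
  have hbs : BddAbove ((fun s => min (a s) (sInf (b '' Icc t s))) '' Icc t T) := by
    refine ⟨k t, ?_⟩
    rintro _ ⟨s, hs, rfl⟩
    exact hlowa s hs
  apply le_antisymm
  · by_contra hcon
    rw [not_le] at hcon
    obtain ⟨c, hc1, hc2⟩ := exists_between hcon
    rw [max_lt_iff] at hc1
    obtain ⟨hc1, hc3⟩ := hc1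
    have hsub : Icc t T ⊆ Icc 0 T := Icc_subset_Icc ht0 le_rfl
    have hcl : IsClosed (Icc t T ∩ k ⁻¹' Iic c) :=
      (hk.mono hsub).preimage_isClosed_of_isClosed isClosed_Icc isClosed_Iic
    have hcomp : IsCompact (Icc t T ∩ k ⁻¹' Iic c) :=
      isCompact_Icc.of_isClosed_subset hcl inter_subset_left
    have hge : ∀ s ∈ Icc t T, (∀ v ∈ Icc t s, c ≤ k v) → c ≤ sInf (b '' Icc t s) := by
      intro s hs h
      refine le_csInf ⟨_, t, ⟨le_refl t, hs.1⟩, rfl⟩ ?_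
      rintro _ ⟨v, hv, rfl⟩
      exact (h v hv).trans (hb v ⟨by linarith [hv.1], hv.2.trans hs.2⟩)
    rcases (Icc t T ∩ k ⁻¹' Iic c).eq_empty_or_nonempty with he | hne
    · have hall : ∀ v ∈ Icc t T, c ≤ k v := by
        intro v hv
        by_contra h
        have : v ∈ Icc t T ∩ k ⁻¹' Iic c := ⟨hv, (not_le.1 h).le⟩
        rw [he] at this
        exact this
      have h1 := hge T ⟨htT, le_rfl⟩ hall
      have h2 := hall T ⟨htT, le_rfl⟩
      rw [hkT] at h2
      exact absurd (le_min h2 h1) (not_le.2 hc1)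
    · obtain ⟨σ, ⟨⟨hσ1, hσ2⟩, hσ3⟩, hleast⟩ := hcomp.exists_isLeast hne
      simp only [mem_preimage, mem_Iic] at hσ3
      have htσ : t < σ := by
        rcases hσ1.lt_or_eq with h | h
        · exact h
        · subst h; linarith
      have hbefore : ∀ v, t ≤ v → v < σ → c < k v := by
        intro v h1 h2
        by_contra h
        exact absurd (hleast ⟨⟨h1, by linarith⟩, not_lt.1 h⟩) (not_le.2 h2)
      have hkσ : c ≤ k σ := by
        by_contra h
        rw [not_le] at h
        have hcσ := hk σ ⟨by linarith, hσ2⟩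
        obtain ⟨δ, hδ, hd⟩ := Metric.continuousWithinAt_iff.1 hcσ (c - k σ) (by linarith)
        have hr1 : max t (σ - δ / 2) < σ := max_lt htσ (by linarith)
        have hr2 := le_max_left t (σ - δ / 2)
        have hr3 := le_max_right t (σ - δ / 2)
        generalize max t (σ - δ / 2) = r at *
        have h3 := hd (x := r) ⟨by linarith, by linarith⟩
          (by rw [Real.dist_eq, abs_of_neg] <;> linarith)
        rw [Real.dist_eq] at h3
        have := (abs_lt.1 h3).2
        have := hbefore r hr2 hr1
        linarith
      have hall : ∀ v, t ≤ v → v ≤ σ → c ≤ k v := by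
        intro v h1 h2
        rcases h2.lt_or_eq with h | h
        · exact (hbefore v h1 h).le
        · rw [h]; exact hkσ
      have := hmin' t σ ht0 htσ hσ2 (by
        intro v hv1 hv2
        by_contra h
        rw [not_lt] at h
        have hv : v ∈ Icc t T := ⟨hv1.le, hv2.trans hσ2⟩
        have h1 := hge v hv fun w hw => hall w hw.1 (hw.2.trans hv2)
        have h2 := hall v hv1.le hv2
        have h3 : min (a v) (sInf (b '' Icc t v)) ≤ _ := le_csSup hbs ⟨v, hv, rfl⟩
        have h4 := le_min (h2.trans h) h1
        linarith)
      linarith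
  · refine max_le ?_ ?_
    · have := hlow T ⟨htT, le_rfl⟩
      rwa [hkT] at this
    · refine csSup_le ⟨_, t, ⟨le_refl t, htT⟩, rfl⟩ ?_
      rintro _ ⟨s, hs, rfl⟩
      exact hlowa s hs

theorem Hbar_strictMono {Ω : Type*} [MeasurableSpace Ω] {T cl cu Ch : ℝ}
    (Ps : Set (Measure Ω)) (hPs : Ps.Nonempty) (hprob : ∀ P ∈ Ps, IsProbabilityMeasure P)
    {l u : ℝ → ℝ} {hb : ℝ → Ω → ℝ → ℝ} (hHr : HrAssumption T cl cu Ch l u hb)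
    (t : ℝ) (X : Ω → ℝ) (hX : EIntegrable Ps X) :
    StrictMono (fun x => Hbar Ps hb t x X) := by
  obtain ⟨hcl, -, hCh, -, -, -, -, hmeas, -, hmono, hgrow, hlip⟩ := hHr
  obtain ⟨hXm, hXi, M, hM⟩ := hX
  generalize hE : sublinE Ps X = E
  have hcont : ∀ ω, Continuous (hb t ω) := by
    intro ω
    refine (LipschitzWith.of_dist_le_mul (K := cu.toNNReal) fun y y' => ?_).continuous
    rw [Real.dist_eq, Real.dist_eq]
    exact (hlip t ω y y').2.trans
      (mul_le_mul_of_nonneg_right (Real.le_coe_toNNReal cu) (abs_nonneg _))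
  have hunc : Measurable (Function.uncurry fun y ω => hb t ω y) :=
    measurable_uncurry_of_continuous_of_measurable hcont (hmeas t)
  have hm : ∀ x, Measurable fun ω => hb t ω (x + X ω - E) := fun x =>
    hunc.comp (((hXm.const_add x).sub_const E).prodMk measurable_id)
  have hbd : ∀ x ω, |hb t ω (x + X ω - E)| ≤ Ch * (1 + |x| + |E|) + Ch * |X ω| := by
    intro x ω
    refine (hgrow t ω _).trans ?_
    have h1 := abs_sub (x + X ω) E
    have h2 := abs_add_le x (X ω)
    nlinarith
  have hdomi : ∀ x, ∀ P ∈ Ps, Integrable (fun ω => Ch * (1 + |x| + |E|) + Ch * |X ω|) P := by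
    intro x P hP
    have := hprob P hP
    exact (integrable_const _).add ((hXi P hP).abs.const_mul _)
  have hint : ∀ x, ∀ P ∈ Ps, Integrable (fun ω => hb t ω (x + X ω - E)) P := by
    intro x P hP
    exact (hdomi x P hP).mono' (hm x).aestronglyMeasurable (Eventually.of_forall (hbd x))
  have hbdd : ∀ x, BddAbove ((fun P => ∫ ω, hb t ω (x + X ω - E) ∂P) '' Ps) := by
    intro x
    refine ⟨Ch * (1 + |x| + |E|) + Ch * M, ?_⟩
    rintro _ ⟨P, hP, rfl⟩
    have := hprob P hP
    have h1 : ∫ ω, hb t ω (x + X ω - E) ∂P ≤ ∫ ω, (Ch * (1 + |x| + |E|) + Ch * |X ω|) ∂P :=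
      integral_mono (hint x P hP) (hdomi x P hP) fun ω => (le_abs_self _).trans (hbd x ω)
    rw [integral_add (integrable_const _) ((hXi P hP).abs.const_mul _),
      integral_const_mul Ch (fun ω => |X ω|)] at h1
    simp only [integral_const, probReal_univ, one_smul] at h1
    have := mul_le_mul_of_nonneg_left (hM P hP) hCh.le
    exact h1.trans (by linarith)
  intro x y hxy
  simp only [Hbar, sublinE] at hE ⊢
  rw [hE]
  have key : sSup ((fun P => ∫ ω, hb t ω (x + X ω - E) ∂P) '' Ps) ≤
      sSup ((fun P => ∫ ω, hb t ω (y + X ω - E) ∂P) '' Ps) - cl * (y - x) := by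
    refine csSup_le (hPs.image _) ?_
    rintro _ ⟨P, hP, rfl⟩
    have := hprob P hP
    have h1 : ∫ ω, (hb t ω (x + X ω - E) + cl * (y - x)) ∂P ≤ ∫ ω, hb t ω (y + X ω - E) ∂P := by
      refine integral_mono ((hint x P hP).add (integrable_const _)) (hint y P hP) fun ω => ?_
      have h2 := (hlip t ω (y + X ω - E) (x + X ω - E)).1
      have h3 : hb t ω (x + X ω - E) < hb t ω (y + X ω - E) := hmono t ω (by linarith)
      rw [abs_of_pos (by linarith), abs_of_pos (by linarith)] at h2
      show hb t ω (x + X ω - E) + cl * (y - x) ≤ hb t ω (y + X ω - E)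
      linarith
    rw [integral_add (hint x P hP) (integrable_const _)] at h1
    simp only [integral_const, probReal_univ, one_smul] at h1
    have h4 := le_csSup (hbdd y) ⟨P, hP, rfl⟩
    simp only at h4 ⊢
    linarith
  have := mul_pos hcl (sub_pos.2 hxy)
  linarith

/-- explicit formula for the reflecting term of the backward Skorokhod problem
with sublinear expectation. -/
theorem stmt7 {Ω : Type*} [MeasurableSpace Ω] (T cl cu Ch : ℝ) (hT : 0 < T)
    (Ps : Set (Measure Ω)) (hPs : Ps.Nonempty) (hprob : ∀ P ∈ Ps, IsProbabilityMeasure P)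
    (l u : ℝ → ℝ) (hb : ℝ → Ω → ℝ → ℝ) (hHr : HrAssumption T cl cu Ch l u hb)
    (L U : ℝ → (Ω → ℝ) → ℝ)
    (hL : ∀ t ∈ Icc (0:ℝ) T, ∀ X : Ω → ℝ, EIntegrable Ps X → Hbar Ps hb t (L t X) X = l t)
    (hU : ∀ t ∈ Icc (0:ℝ) T, ∀ X : Ω → ℝ, EIntegrable Ps X → Hbar Ps hb t (U t X) X = u t)
    (Ybar : ℝ → Ω → ℝ) (hYbar : MeanContinuous Ps T Ybar)
    (htermL : l T ≤ sublinE Ps fun ω => hb T ω (Ybar T ω))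
    (htermU : (sublinE Ps fun ω => hb T ω (Ybar T ω)) ≤ u T)
    (Y : ℝ → Ω → ℝ) (R : ℝ → ℝ) (hsol : IsBSPsol Ps T hb l u Ybar Y R) :
    ∀ t ∈ Icc (0:ℝ) T,
      R T - R t = -(max
        (min (max (sublinE Ps (Ybar T) - U T (Ybar T)) 0)
          (sInf ((fun v => sublinE Ps (Ybar v) - L v (Ybar v)) '' Icc t T)))
        (sSup ((fun s => min (sublinE Ps (Ybar s) - U s (Ybar s))
          (sInf ((fun v => sublinE Ps (Ybar v) - L v (Ybar v)) '' Icc t s))) '' Icc t T))) := by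
  intro t ht
  obtain ⟨hY, hbar, hRc, -, -, hmin⟩ := hsol
  have hφ : ∀ v ∈ Icc (0:ℝ) T, sublinE Ps (fun ω => hb v ω (Y v ω)) =
      Hbar Ps hb v (R T - R v + sublinE Ps (Ybar v)) (Ybar v) := by
    intro v hv
    unfold Hbar
    congr 1
    funext ω
    rw [hY v hv ω]
    congr 1
    ring
  have hsm : ∀ v ∈ Icc (0:ℝ) T, StrictMono fun x => Hbar Ps hb v x (Ybar v) :=
    fun v hv => Hbar_strictMono Ps hPs hprob hHr v (Ybar v) (hYbar.1 v hv)
  have e1 : ∀ v ∈ Icc (0:ℝ) T, l v = Hbar Ps hb v (L v (Ybar v)) (Ybar v) :=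
    fun v hv => (hL v hv _ (hYbar.1 v hv)).symm
  have e2 : ∀ v ∈ Icc (0:ℝ) T, u v = Hbar Ps hb v (U v (Ybar v)) (Ybar v) :=
    fun v hv => (hU v hv _ (hYbar.1 v hv)).symm
  have key := sk_formula T (fun v => R v - R T)
    (fun v => sublinE Ps (Ybar v) - U v (Ybar v)) (fun v => sublinE Ps (Ybar v) - L v (Ybar v))
    (hRc.sub continuousOn_const)
    (by
      intro v hv
      have h := (hbar v hv).2
      rw [hφ v hv, e2 v hv] at h
      have := (hsm v hv).le_iff_le.1 h
      linarith)
    (by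
      intro v hv
      have h := (hbar v hv).1
      rw [hφ v hv, e1 v hv] at h
      have := (hsm v hv).le_iff_le.1 h
      linarith)
    (sub_self _)
    (by
      intro s r hs hsr hr h
      have := (hmin s r hs hsr hr).2 (by
        intro v h1 h2
        have hv : v ∈ Icc (0:ℝ) T := ⟨by linarith, by linarith⟩
        have h3 := h v h1 h2
        simp only at h3 ⊢
        rw [hφ v hv, e1 v hv]
        exact hsm v hv (by linarith))
      linarith)
    (by
      intro s r hs hsr hr h
      have := (hmin s r hs hsr hr).1 (by
        intro v h1 h2
        have hv : v ∈ Icc (0:ℝ) T := ⟨by linarith, by linarith⟩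
        have h3 := h v h1 h2
        simp only at h3 ⊢
        rw [hφ v hv, e2 v hv]
        exact hsm v hv (by linarith))
      linarith)
    t ht
  rw [← key]
  ring
end

section
/- For i = 1, 2, let (Ȳ^i_t)_{t∈[0,T]} be mean-continuous families of Ê-integrable random variables with l^i_T ≤ Ê[ħ^i(T, Ȳ^i_T)] ≤ u^i_T, and let (Y^i, R^i) = BSP̂_{l^i}^{u^i}(Ȳ^i, ħ^i). Then for every t ∈ [0,T]: |(R^1_T − R^1_t) − (R^2_T − R^2_t)| ≤ sup_{s∈[t,T]} |Ê[Ȳ^1_s] − Ê[Ȳ^2_s]| + (2c̄/c̲) sup_{s∈[t,T]} Ê[|Ȳ^1_s − Ȳ^2_s|] + (1/c̲) { sup_{s∈[t,T]} max( |H̄^1(s, L^1_s(Ȳ^2_s), Ȳ^2_s) − H̄^2(s, L^1_s(Ȳ^2_s), Ȳ^2_s)|, |H̄^1(s, U^1_s(Ȳ^2_s), Ȳ^2_s) − H̄^2(s, U^1_s(Ȳ^2_s), Ȳ^2_s)| ) + sup_{s∈[t,T]} max( |l^1_s − l^2_s|, |u^1_s − u^2_s| ) }. -/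
open MeasureTheory Set Filter

section Helpers

theorem aux_le {Ω : Type*} [MeasurableSpace Ω] {Ps : Set (Measure Ω)} {X : Ω → ℝ}
    (hX : EIntegrable Ps X) {P : Measure Ω} (hP : P ∈ Ps) : ∫ ω, X ω ∂P ≤ sublinE Ps X := by
  obtain ⟨-, -, M, hM⟩ := hX
  refine le_csSup ⟨M, ?_⟩ ⟨P, hP, rfl⟩
  rintro _ ⟨Q, hQ, rfl⟩
  exact ((le_abs_self _).trans (abs_integral_le_integral_abs)).trans (hM Q hQ)

theorem aux_sup_le {Ω : Type*} [MeasurableSpace Ω] {Ps : Set (Measure Ω)} (hPs : Ps.Nonempty)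
    {X : Ω → ℝ} {a : ℝ} (h : ∀ P ∈ Ps, ∫ ω, X ω ∂P ≤ a) : sublinE Ps X ≤ a := by
  refine csSup_le (hPs.image _) ?_
  rintro _ ⟨Q, hQ, rfl⟩
  exact h Q hQ

theorem aux_eint_abs {Ω : Type*} [MeasurableSpace Ω] {Ps : Set (Measure Ω)} {X : Ω → ℝ}
    (hX : EIntegrable Ps X) : EIntegrable Ps (fun ω => |X ω|) := by
  obtain ⟨h1, h2, M, h3⟩ := hX
  refine ⟨h1.abs, fun P hP => (h2 P hP).abs, M, ?_⟩
  simpa using h3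

theorem aux_eint_sub {Ω : Type*} [MeasurableSpace Ω] {Ps : Set (Measure Ω)} {X Y : Ω → ℝ}
    (hX : EIntegrable Ps X) (hY : EIntegrable Ps Y) : EIntegrable Ps (fun ω => X ω - Y ω) := by
  obtain ⟨h1, h2, M, h3⟩ := hX
  obtain ⟨k1, k2, N, k3⟩ := hY
  refine ⟨h1.sub k1, fun P hP => (h2 P hP).sub (k2 P hP), M + N, fun P hP => ?_⟩
  calc ∫ ω, |X ω - Y ω| ∂P ≤ ∫ ω, (|X ω| + |Y ω|) ∂P :=
        integral_mono ((h2 P hP).sub (k2 P hP)).abs ((h2 P hP).abs.add (k2 P hP).abs)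
          (fun ω => abs_sub (X ω) (Y ω))
    _ = ∫ ω, |X ω| ∂P + ∫ ω, |Y ω| ∂P := integral_add (h2 P hP).abs (k2 P hP).abs
    _ ≤ M + N := add_le_add (h3 P hP) (k3 P hP)

theorem aux_nonneg {Ω : Type*} [MeasurableSpace Ω] {Ps : Set (Measure Ω)} {X : Ω → ℝ}
    (hX : ∀ ω, 0 ≤ X ω) : 0 ≤ sublinE Ps X := by
  refine Real.sSup_nonneg ?_
  rintro _ ⟨Q, hQ, rfl⟩
  exact integral_nonneg hX

/-- domination: `X ≤ Y + c|Z|` pointwise -/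
theorem aux_dom {Ω : Type*} [MeasurableSpace Ω] {Ps : Set (Measure Ω)} (hPs : Ps.Nonempty)
    {X Y Z : Ω → ℝ} (hX : EIntegrable Ps X) (hY : EIntegrable Ps Y) (hZ : EIntegrable Ps Z)
    {c : ℝ} (hc : 0 ≤ c) (h : ∀ ω, X ω ≤ Y ω + c * |Z ω|) :
    sublinE Ps X ≤ sublinE Ps Y + c * sublinE Ps (fun ω => |Z ω|) := by
  refine aux_sup_le hPs fun P hP => ?_
  have hz := ((hZ.2.1 P hP).abs).const_mul c
  calc ∫ ω, X ω ∂P ≤ ∫ ω, (Y ω + c * |Z ω|) ∂P :=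
        integral_mono (hX.2.1 P hP) ((hY.2.1 P hP).add hz) h
    _ = ∫ ω, Y ω ∂P + c * ∫ ω, |Z ω| ∂P := by
        rw [integral_add (hY.2.1 P hP) hz, integral_const_mul]
    _ ≤ _ := add_le_add (aux_le hY hP)
        (mul_le_mul_of_nonneg_left (aux_le (aux_eint_abs hZ) hP) hc)

theorem aux_shift {Ω : Type*} [MeasurableSpace Ω] {Ps : Set (Measure Ω)} (hPs : Ps.Nonempty)
    (hprob : ∀ P ∈ Ps, IsProbabilityMeasure P)
    {X Y : Ω → ℝ} (hX : EIntegrable Ps X) (hY : EIntegrable Ps Y)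
    {c : ℝ} (h : ∀ ω, X ω + c ≤ Y ω) :
    sublinE Ps X + c ≤ sublinE Ps Y := by
  suffices sublinE Ps X ≤ sublinE Ps Y - c by linarith
  refine aux_sup_le hPs fun P hP => ?_
  have := hprob P hP
  have h1 : ∫ ω, (X ω + c) ∂P ≤ ∫ ω, Y ω ∂P :=
    integral_mono ((hX.2.1 P hP).add (integrable_const c)) (hY.2.1 P hP) h
  rw [integral_add (hX.2.1 P hP) (integrable_const c)] at h1
  simp at h1
  linarith [aux_le hY hP]

theorem aux_eint_hb {Ω : Type*} [MeasurableSpace Ω] {Ps : Set (Measure Ω)}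
    (hprob : ∀ P ∈ Ps, IsProbabilityMeasure P) {T cl cu Ch : ℝ} {l u : ℝ → ℝ}
    {hb : ℝ → Ω → ℝ → ℝ} (H : HrAssumption T cl cu Ch l u hb) {X : Ω → ℝ}
    (hX : EIntegrable Ps X) (t x : ℝ) : EIntegrable Ps (fun ω => hb t ω (x + X ω)) := by
  obtain ⟨hcl, hclu, hCh, -, -, -, -, hmeas, -, -, hgr, hlip⟩ := H
  have hcont : ∀ ω, Continuous (fun y => hb t ω y) := by
    intro ω
    have : LipschitzWith cu.toNNReal (hb t ω) := by
      refine LipschitzWith.of_dist_le_mul fun y y' => ?_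
      rw [Real.dist_eq, Real.dist_eq, Real.coe_toNNReal _ (hcl.le.trans hclu)]
      exact (hlip t ω y y').2
    exact this.continuous
  have hm : Measurable (fun ω => hb t ω (x + X ω)) := by
    have h := measurable_uncurry_of_continuous_of_measurable (u := fun y ω => hb t ω y)
      hcont (fun y => hmeas t y)
    exact h.comp ((hX.1.const_add x).prodMk measurable_id)
  have hb1 : ∀ ω, |hb t ω (x + X ω)| ≤ Ch * (1 + |x|) + Ch * |X ω| := by
    intro ω
    have h1 := hgr t ω (x + X ω)
    have h2 := mul_le_mul_of_nonneg_left (abs_add_le x (X ω)) hCh.le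
    nlinarith
  obtain ⟨M, hM⟩ := hX.2.2
  have hi : ∀ P ∈ Ps, Integrable (fun ω => Ch * (1 + |x|) + Ch * |X ω|) P := by
    intro P hP
    have := hprob P hP
    exact (integrable_const _).add ((hX.2.1 P hP).abs.const_mul Ch)
  have hi2 : ∀ P ∈ Ps, Integrable (fun ω => hb t ω (x + X ω)) P := by
    intro P hP
    exact (hi P hP).mono' hm.aestronglyMeasurable (Eventually.of_forall hb1)
  refine ⟨hm, hi2, Ch * (1 + |x|) + Ch * M, fun P hP => ?_⟩
  have := hprob P hP
  have h1 := integral_mono (hi2 P hP).abs (hi P hP) hb1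
  rw [integral_add (integrable_const _) ((hX.2.1 P hP).abs.const_mul Ch),
    integral_const_mul Ch (fun ω => |X ω|)] at h1
  simp at h1
  have := mul_le_mul_of_nonneg_left (hM P hP) hCh.le
  linarith

theorem aux_lower {Ω : Type*} [MeasurableSpace Ω] {Ps : Set (Measure Ω)} (hPs : Ps.Nonempty)
    (hprob : ∀ P ∈ Ps, IsProbabilityMeasure P) {T cl cu Ch : ℝ} {l u : ℝ → ℝ}
    {hb : ℝ → Ω → ℝ → ℝ} (H : HrAssumption T cl cu Ch l u hb) {X : Ω → ℝ}
    (hX : EIntegrable Ps X) (t x y : ℝ) (hxy : x ≤ y) :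
    sublinE Ps (fun ω => hb t ω (x + X ω)) + cl * (y - x)
      ≤ sublinE Ps (fun ω => hb t ω (y + X ω)) := by
  refine aux_shift hPs hprob (aux_eint_hb hprob H hX t x) (aux_eint_hb hprob H hX t y) fun ω => ?_
  obtain ⟨hcl, hclu, hCh, -, -, -, -, hmeas, -, hmono, hgr, hlip⟩ := H
  have h1 := (hlip t ω (y + X ω) (x + X ω)).1
  have h2 : hb t ω (x + X ω) ≤ hb t ω (y + X ω) := (hmono t ω).monotone (by linarith)
  rw [abs_of_nonneg (by linarith), abs_of_nonneg (by linarith)] at h1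
  nlinarith

theorem aux_upper {Ω : Type*} [MeasurableSpace Ω] {Ps : Set (Measure Ω)} (hPs : Ps.Nonempty)
    (hprob : ∀ P ∈ Ps, IsProbabilityMeasure P) {T cl cu Ch : ℝ} {l u : ℝ → ℝ}
    {hb : ℝ → Ω → ℝ → ℝ} (H : HrAssumption T cl cu Ch l u hb) {X X' : Ω → ℝ}
    (hX : EIntegrable Ps X) (hX' : EIntegrable Ps X') (t x : ℝ) :
    |sublinE Ps (fun ω => hb t ω (x + X ω)) - sublinE Ps (fun ω => hb t ω (x + X' ω))|
      ≤ cu * sublinE Ps (fun ω => |X ω - X' ω|) := by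
  have e := aux_eint_hb hprob H hX t x
  have e' := aux_eint_hb hprob H hX' t x
  have ed := aux_eint_sub hX hX'
  obtain ⟨hcl, hclu, hCh, -, -, -, -, hmeas, -, hmono, hgr, hlip⟩ := H
  have hl : ∀ ω, |hb t ω (x + X ω) - hb t ω (x + X' ω)| ≤ cu * |X ω - X' ω| := by
    intro ω
    have := (hlip t ω (x + X ω) (x + X' ω)).2
    rwa [add_sub_add_left_eq_sub] at this
  have h1 := aux_dom hPs e e' ed (hcl.le.trans hclu) (fun ω => by
    linarith [(abs_le.1 (hl ω)).2])
  have h2 := aux_dom hPs e' e ed (hcl.le.trans hclu) (fun ω => by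
    linarith [(abs_le.1 (hl ω)).1])
  rw [abs_le]; constructor <;> linarith

theorem aux_growth {Ω : Type*} [MeasurableSpace Ω] {Ps : Set (Measure Ω)} (hPs : Ps.Nonempty)
    (hprob : ∀ P ∈ Ps, IsProbabilityMeasure P) {T cl cu Ch : ℝ} {l u : ℝ → ℝ}
    {hb : ℝ → Ω → ℝ → ℝ} (H : HrAssumption T cl cu Ch l u hb) {X : Ω → ℝ}
    (hX : EIntegrable Ps X) (t x : ℝ) :
    |sublinE Ps (fun ω => hb t ω (x + X ω))|
      ≤ Ch * (1 + |x|) + cu * sublinE Ps (fun ω => |X ω|) := by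
  have e0 : EIntegrable Ps (fun _ : Ω => (0:ℝ)) :=
    ⟨measurable_const, fun P hP => integrable_zero _ _ _, 0, by simp⟩
  have h := aux_upper hPs hprob H hX e0 t x
  have e := aux_eint_hb hprob H e0 t x
  simp only [sub_zero, add_zero] at h e
  have h2 : |sublinE Ps (fun ω => hb t ω x)| ≤ Ch * (1 + |x|) := by
    obtain ⟨hcl, hclu, hCh, -, -, -, -, hmeas, -, hmono, hgr, hlip⟩ := H
    have h3 : ∀ P ∈ Ps, |∫ ω, hb t ω x ∂P| ≤ Ch * (1 + |x|) := by
      intro P hP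
      have := hprob P hP
      have := norm_integral_le_of_norm_le_const (μ := P) (f := fun ω => hb t ω x)
        (Eventually.of_forall fun ω => hgr t ω x)
      simpa using this
    rw [abs_le]; constructor
    · obtain ⟨P, hP⟩ := hPs
      exact (abs_le.1 (h3 P hP)).1.trans (aux_le e hP)
    · exact aux_sup_le hPs fun P hP => (abs_le.1 (h3 P hP)).2
  have := abs_sub_abs_le_abs_sub (sublinE Ps (fun ω => hb t ω (x + X ω)))
    (sublinE Ps (fun ω => hb t ω x))
  linarith

theorem aux_bdd {Ω : Type*} [MeasurableSpace Ω] {Ps : Set (Measure Ω)} (hPs : Ps.Nonempty)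
    {T : ℝ} {S S' : ℝ → Ω → ℝ} (hS : MeanContinuous Ps T S) (hS' : MeanContinuous Ps T S') :
    ∃ M, ∀ s ∈ Icc (0:ℝ) T, sublinE Ps (fun ω => |S s ω - S' s ω|) ≤ M := by
  have hc : ContinuousOn (fun s => sublinE Ps (fun ω => |S s ω - S' s ω|)) (Icc 0 T) := by
    intro t ht
    have hsum : Tendsto (fun s => sublinE Ps (fun ω => |S s ω - S t ω|)
        + sublinE Ps (fun ω => |S' s ω - S' t ω|)) (nhdsWithin t (Icc 0 T)) (nhds 0) := by
      simpa using (hS.2 t ht).add (hS'.2 t ht)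
    refine tendsto_iff_dist_tendsto_zero.2 (squeeze_zero' (Eventually.of_forall fun _ => dist_nonneg)
      ?_ hsum)
    filter_upwards [self_mem_nhdsWithin] with s hs
    have a := hS.1 s hs
    have b := hS.1 t ht
    have c := hS'.1 s hs
    have d := hS'.1 t ht
    have key : ∀ {A B C D : Ω → ℝ}, EIntegrable Ps A → EIntegrable Ps B → EIntegrable Ps C →
        EIntegrable Ps D → (∀ ω, |A ω| ≤ |B ω| + |C ω| + |D ω|) →
        sublinE Ps (fun ω => |A ω|) ≤ sublinE Ps (fun ω => |B ω|) +
          (sublinE Ps (fun ω => |C ω|) + sublinE Ps (fun ω => |D ω|)) := by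
      intro A B C D hA hB hC hD h
      refine aux_sup_le hPs fun P hP => ?_
      have h1 := integral_mono (hA.2.1 P hP).abs
        (((hB.2.1 P hP).abs.add (hC.2.1 P hP).abs).add (hD.2.1 P hP).abs) h
      have h2 : ∫ ω, ((fun ω => |B ω|) + (fun ω => |C ω|) + (fun ω => |D ω|)) ω ∂P =
        ∫ ω, |B ω| ∂P + ∫ ω, |C ω| ∂P + ∫ ω, |D ω| ∂P := by
        rw [integral_add' ((hB.2.1 P hP).abs.add (hC.2.1 P hP).abs) (hD.2.1 P hP).abs,
          integral_add' (hB.2.1 P hP).abs (hC.2.1 P hP).abs]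
      have h3 := aux_le (aux_eint_abs hB) hP
      have h4 := aux_le (aux_eint_abs hC) hP
      have h5 := aux_le (aux_eint_abs hD) hP
      have h6 := h1.trans_eq h2
      linarith
    have k1 := key (aux_eint_sub a c) (aux_eint_sub b d) (aux_eint_sub a b) (aux_eint_sub c d)
      (fun ω => by
        have := abs_add_three (S t ω - S' t ω) (S s ω - S t ω) (-(S' s ω - S' t ω))
        rw [abs_neg] at this
        refine le_trans (le_of_eq ?_) this
        congr 1; ring)
    have k2 := key (aux_eint_sub b d) (aux_eint_sub a c) (aux_eint_sub a b) (aux_eint_sub c d)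
      (fun ω => by
        have := abs_add_three (S s ω - S' s ω) (-(S s ω - S t ω)) ((S' s ω - S' t ω))
        rw [abs_neg] at this
        refine le_trans (le_of_eq ?_) this
        congr 1; ring)
    rw [Real.dist_eq, abs_le]
    constructor <;> linarith
  obtain ⟨M, hM⟩ := isCompact_Icc.bddAbove_image hc
  exact ⟨M, fun s hs => hM ⟨s, hs, rfl⟩⟩

theorem aux_cross {T : ℝ} {φ1 l1 u1 R1 φ2 l2 u2 R2 : ℝ → ℝ}
    (hR1 : ContinuousOn R1 (Icc 0 T)) (hR2 : ContinuousOn R2 (Icc 0 T))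
    (m1 : MinimalityIncr T φ1 l1 u1 R1) (m2 : MinimalityIncr T φ2 l2 u2 R2)
    {t B : ℝ} (ht : t ∈ Icc 0 T) (hB : 0 ≤ B)
    (h : ∀ v ∈ Icc t T, B < (R1 T - R1 v) - (R2 T - R2 v) → l1 v < φ1 v ∧ φ2 v < u2 v) :
    (R1 T - R1 t) - (R2 T - R2 t) ≤ B := by
  by_contra! hcon
  set D : ℝ → ℝ := fun v => (R1 T - R1 v) - (R2 T - R2 v) with hD
  have hsub : Icc t T ⊆ Icc 0 T := Icc_subset_Icc_left ht.1
  have hDc : ContinuousOn D (Icc t T) :=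
    ((continuousOn_const.sub hR1).sub (continuousOn_const.sub hR2)).mono hsub
  have hcl : IsClosed (Icc t T ∩ D ⁻¹' Iic B) := hDc.preimage_isClosed_of_isClosed isClosed_Icc isClosed_Iic
  have hcpt : IsCompact (Icc t T ∩ D ⁻¹' Iic B) := isCompact_Icc.of_isClosed_subset hcl inter_subset_left
  have hne : (Icc t T ∩ D ⁻¹' Iic B).Nonempty := ⟨T, ⟨ht.2, le_rfl⟩, by simp [hD, hB]⟩
  obtain ⟨τ, ⟨hτ1, hτ2⟩, hτ3⟩ := hcpt.exists_isLeast hne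
  have hτ2 : D τ ≤ B := hτ2
  have hlt : t < τ := by
    rcases hτ1.1.lt_or_eq with h' | h'
    · exact h'
    · rw [← h'] at hτ2
      exact absurd hτ2 (not_le.2 hcon)
  have hbig : ∀ v, t ≤ v → v < τ → B < D v := by
    intro v h1 h2
    by_contra! h3
    exact absurd (hτ3 ⟨⟨h1, h2.le.trans hτ1.2⟩, h3⟩) (not_le.2 h2)
  have hge : ∀ s ∈ Ioo t τ, D t ≤ D s := by
    intro s hs
    have hsT : s ≤ T := hs.2.le.trans hτ1.2
    have a1 := (m1 t s ht.1 hs.1 hsT).2 fun v h1 h2 =>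
      (h v ⟨h1.le, h2.trans hsT⟩ (hbig v h1.le (h2.trans_lt hs.2))).1
    have a2 := (m2 t s ht.1 hs.1 hsT).1 fun v h1 h2 =>
      (h v ⟨h1.le, h2.trans hsT⟩ (hbig v h1.le (h2.trans_lt hs.2))).2
    simp only [hD]; linarith
  have : (nhdsWithin τ (Ioo t τ)).NeBot := right_nhdsWithin_Ioo_neBot hlt
  have htend : Tendsto D (nhdsWithin τ (Ioo t τ)) (nhds (D τ)) :=
    (hDc τ hτ1).mono_left (nhdsWithin_mono _ fun s hs => ⟨hs.1.le, hs.2.le.trans hτ1.2⟩)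
  have := ge_of_tendsto htend (by filter_upwards [self_mem_nhdsWithin] with s hs using hge s hs)
  have hcon' : B < D t := hcon
  linarith

/-- Pointwise comparison: if `K1` satisfies `φ1 ≤ b1` and `K2` satisfies `φ2 ≥ b2`, or with
both inequalities reversed. -/
theorem aux_point {Ω : Type*} [MeasurableSpace Ω] {Ps : Set (Measure Ω)} (hPs : Ps.Nonempty)
    (hprob : ∀ P ∈ Ps, IsProbabilityMeasure P) {T cl cu Ch : ℝ} {l1 u1 l2 u2 : ℝ → ℝ}
    {hb1 hb2 : ℝ → Ω → ℝ → ℝ} (H1 : HrAssumption T cl cu Ch l1 u1 hb1)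
    (H2 : HrAssumption T cl cu Ch l2 u2 hb2) {X1 X2 : Ω → ℝ}
    (hX1 : EIntegrable Ps X1) (hX2 : EIntegrable Ps X2) (s k K1 K2 b1 b2 : ℝ)
    (hk : sublinE Ps (fun ω => hb1 s ω (k + X2 ω)) = b1) :
    (sublinE Ps (fun ω => hb1 s ω (K1 + X1 ω)) ≤ b1 →
      b2 ≤ sublinE Ps (fun ω => hb2 s ω (K2 + X2 ω)) →
      cl * (K1 - K2) ≤ cu * sublinE Ps (fun ω => |X1 ω - X2 ω|) +
        |b1 - sublinE Ps (fun ω => hb2 s ω (k + X2 ω))| + |b1 - b2|) ∧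
    (b1 ≤ sublinE Ps (fun ω => hb1 s ω (K1 + X1 ω)) →
      sublinE Ps (fun ω => hb2 s ω (K2 + X2 ω)) ≤ b2 →
      cl * (K2 - K1) ≤ cu * sublinE Ps (fun ω => |X1 ω - X2 ω|) +
        |b1 - sublinE Ps (fun ω => hb2 s ω (k + X2 ω))| + |b1 - b2|) := by
  have hcl := H1.1
  have hcu := H1.1.le.trans H1.2.1
  have hE : 0 ≤ cu * sublinE Ps (fun ω => |X1 ω - X2 ω|) :=
    mul_nonneg hcu (aux_nonneg fun ω => abs_nonneg _)
  have hu := abs_le.1 (aux_upper hPs hprob H1 hX1 hX2 s K1)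
  have hd1 := neg_abs_le (b1 - sublinE Ps (fun ω => hb2 s ω (k + X2 ω)))
  have hd2 := le_abs_self (b1 - sublinE Ps (fun ω => hb2 s ω (k + X2 ω)))
  have he1 := neg_abs_le (b1 - b2)
  have he2 := le_abs_self (b1 - b2)
  constructor
  · intro p1 p2
    have q1 : cl * (K1 - k) ≤ cu * sublinE Ps (fun ω => |X1 ω - X2 ω|) := by
      rcases le_total k K1 with hle | hle
      · have := aux_lower hPs hprob H1 hX2 s k K1 hle
        linarith
      · nlinarith
    have q2 : cl * (k - K2) ≤ |b1 - sublinE Ps (fun ω => hb2 s ω (k + X2 ω))| + |b1 - b2| := by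
      rcases le_total K2 k with hle | hle
      · have := aux_lower hPs hprob H2 hX2 s K2 k hle
        linarith
      · have := abs_nonneg (b1 - sublinE Ps (fun ω => hb2 s ω (k + X2 ω)))
        have := abs_nonneg (b1 - b2)
        nlinarith
    linarith
  · intro p1 p2
    have q1 : cl * (k - K1) ≤ cu * sublinE Ps (fun ω => |X1 ω - X2 ω|) := by
      rcases le_total K1 k with hle | hle
      · have := aux_lower hPs hprob H1 hX2 s K1 k hle
        linarith
      · nlinarith
    have q2 : cl * (K2 - k) ≤ |b1 - sublinE Ps (fun ω => hb2 s ω (k + X2 ω))| + |b1 - b2| := by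
      rcases le_total k K2 with hle | hle
      · have := aux_lower hPs hprob H2 hX2 s k K2 hle
        linarith
      · have := abs_nonneg (b1 - sublinE Ps (fun ω => hb2 s ω (k + X2 ω)))
        have := abs_nonneg (b1 - b2)
        nlinarith
    linarith

/-- boundedness of the middle term -/
theorem aux_mid {Ω : Type*} [MeasurableSpace Ω] {Ps : Set (Measure Ω)} (hPs : Ps.Nonempty)
    (hprob : ∀ P ∈ Ps, IsProbabilityMeasure P) {T cl cu Ch : ℝ} {l1 u1 l2 u2 : ℝ → ℝ}
    {hb1 hb2 : ℝ → Ω → ℝ → ℝ} (H1 : HrAssumption T cl cu Ch l1 u1 hb1)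
    (H2 : HrAssumption T cl cu Ch l2 u2 hb2) {X : Ω → ℝ}
    (hX : EIntegrable Ps X) (s k b M N : ℝ)
    (hk : sublinE Ps (fun ω => hb1 s ω (k + X ω)) = b) (hb : |b| ≤ M)
    (hN : sublinE Ps (fun ω => |X ω|) ≤ N) :
    |b - sublinE Ps (fun ω => hb2 s ω (k + X ω))| ≤
      M + (Ch * (1 + (M + Ch + cu * N) / cl) + cu * N) := by
  have hcl := H1.1
  have hcu := H1.1.le.trans H1.2.1
  have hCh := H1.2.2.1
  have g0 := aux_growth hPs hprob H1 hX s 0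
  have gk := aux_growth hPs hprob H2 hX s k
  have hNc := mul_le_mul_of_nonneg_left hN hcu
  rw [abs_zero, add_zero, mul_one] at g0
  have g0' := abs_le.1 g0
  have hb' := abs_le.1 hb
  have hkb : |k| ≤ (M + Ch + cu * N) / cl := by
    rw [le_div_iff₀ hcl]
    rcases le_total 0 k with hle | hle
    · have := aux_lower hPs hprob H1 hX s 0 k hle
      rw [abs_of_nonneg hle]; linarith
    · have := aux_lower hPs hprob H1 hX s k 0 hle
      rw [abs_of_nonpos hle]; linarith
  have := mul_le_mul_of_nonneg_left (add_le_add_right hkb 1) hCh.le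
  have := abs_sub b (sublinE Ps (fun ω => hb2 s ω (k + X ω)))
  linarith

end Helpers

/-- stability estimate for the reflecting terms of two backward Skorokhod
problems with sublinear expectation, with data `(hb¹, l¹, u¹)` and `(hb², l², u²)` satisfying
(H_r) with the same constants. -/
theorem stmt9 {Ω : Type*} [MeasurableSpace Ω] (T cl cu Ch : ℝ) (hT : 0 < T)
    (Ps : Set (Measure Ω)) (hPs : Ps.Nonempty) (hprob : ∀ P ∈ Ps, IsProbabilityMeasure P)
    (l1 u1 l2 u2 : ℝ → ℝ) (hb1 hb2 : ℝ → Ω → ℝ → ℝ)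
    (hHr1 : HrAssumption T cl cu Ch l1 u1 hb1) (hHr2 : HrAssumption T cl cu Ch l2 u2 hb2)
    (L1 U1 : ℝ → (Ω → ℝ) → ℝ)
    (hL1 : ∀ t ∈ Icc (0:ℝ) T, ∀ X : Ω → ℝ, EIntegrable Ps X → Hbar Ps hb1 t (L1 t X) X = l1 t)
    (hU1 : ∀ t ∈ Icc (0:ℝ) T, ∀ X : Ω → ℝ, EIntegrable Ps X → Hbar Ps hb1 t (U1 t X) X = u1 t)
    (Ybar1 Ybar2 : ℝ → Ω → ℝ)
    (hYbar1 : MeanContinuous Ps T Ybar1) (hYbar2 : MeanContinuous Ps T Ybar2)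
    (hterm1L : l1 T ≤ sublinE Ps fun ω => hb1 T ω (Ybar1 T ω))
    (hterm1U : (sublinE Ps fun ω => hb1 T ω (Ybar1 T ω)) ≤ u1 T)
    (hterm2L : l2 T ≤ sublinE Ps fun ω => hb2 T ω (Ybar2 T ω))
    (hterm2U : (sublinE Ps fun ω => hb2 T ω (Ybar2 T ω)) ≤ u2 T)
    (Y1 Y2 : ℝ → Ω → ℝ) (R1 R2 : ℝ → ℝ)
    (hsol1 : IsBSPsol Ps T hb1 l1 u1 Ybar1 Y1 R1)
    (hsol2 : IsBSPsol Ps T hb2 l2 u2 Ybar2 Y2 R2) :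
    ∀ t ∈ Icc (0:ℝ) T,
      |(R1 T - R1 t) - (R2 T - R2 t)| ≤
        sSup ((fun s => |sublinE Ps (Ybar1 s) - sublinE Ps (Ybar2 s)|) '' Icc t T) +
        (2 * cu / cl) *
          sSup ((fun s => sublinE Ps fun ω => |Ybar1 s ω - Ybar2 s ω|) '' Icc t T) +
        (1 / cl) *
          (sSup ((fun s => max
              |Hbar Ps hb1 s (L1 s (Ybar2 s)) (Ybar2 s) -
                Hbar Ps hb2 s (L1 s (Ybar2 s)) (Ybar2 s)|
              |Hbar Ps hb1 s (U1 s (Ybar2 s)) (Ybar2 s) -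
                Hbar Ps hb2 s (U1 s (Ybar2 s)) (Ybar2 s)|) '' Icc t T) +
            sSup ((fun s => max |l1 s - l2 s| |u1 s - u2 s|) '' Icc t T)) := by
  intro t ht
  have hsub : Icc t T ⊆ Icc 0 T := Icc_subset_Icc_left ht.1
  have hcl := hHr1.1
  have hcu := hHr1.1.le.trans hHr1.2.1
  have hHb : ∀ (hb : ℝ → Ω → ℝ → ℝ) (s x : ℝ) (X : Ω → ℝ), Hbar Ps hb s x X =
      sublinE Ps (fun ω => hb s ω ((x - sublinE Ps X) + X ω)) := by
    intro hb s x X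
    unfold Hbar
    congr 1; funext ω; congr 1; ring
  set F1 : ℝ → ℝ := fun s => |sublinE Ps (Ybar1 s) - sublinE Ps (Ybar2 s)| with hF1
  set F2 : ℝ → ℝ := fun s => sublinE Ps fun ω => |Ybar1 s ω - Ybar2 s ω| with hF2
  set F3 : ℝ → ℝ := fun s => max
              |Hbar Ps hb1 s (L1 s (Ybar2 s)) (Ybar2 s) -
                Hbar Ps hb2 s (L1 s (Ybar2 s)) (Ybar2 s)|
              |Hbar Ps hb1 s (U1 s (Ybar2 s)) (Ybar2 s) -
                Hbar Ps hb2 s (U1 s (Ybar2 s)) (Ybar2 s)| with hF3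
  set F4 : ℝ → ℝ := fun s => max |l1 s - l2 s| |u1 s - u2 s| with hF4
  have n1 : 0 ≤ sSup (F1 '' Icc t T) := by
    refine Real.sSup_nonneg ?_
    rintro _ ⟨s, -, rfl⟩
    exact abs_nonneg _
  have n2 : 0 ≤ sSup (F2 '' Icc t T) := by
    refine Real.sSup_nonneg ?_
    rintro _ ⟨s, -, rfl⟩
    exact aux_nonneg fun ω => abs_nonneg _
  have n3 : 0 ≤ sSup (F3 '' Icc t T) := by
    refine Real.sSup_nonneg ?_
    rintro _ ⟨s, -, rfl⟩
    exact le_max_of_le_left (abs_nonneg _)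
  have n4 : 0 ≤ sSup (F4 '' Icc t T) := by
    refine Real.sSup_nonneg ?_
    rintro _ ⟨s, -, rfl⟩
    exact le_max_of_le_left (abs_nonneg _)
  obtain ⟨M1, hM1⟩ := hHr1.2.2.2.2.2.1
  obtain ⟨M2, hM2⟩ := hHr2.2.2.2.2.2.1
  have b2 : ∀ s ∈ Icc t T, F2 s ≤ sSup (F2 '' Icc t T) := by
    intro s hs
    obtain ⟨M, hM⟩ := aux_bdd hPs hYbar1 hYbar2
    refine le_csSup ⟨M, ?_⟩ ⟨s, hs, rfl⟩
    rintro _ ⟨v, hv, rfl⟩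
    exact hM v (hsub hv)
  have b4 : ∀ s ∈ Icc t T, F4 s ≤ sSup (F4 '' Icc t T) := by
    intro s hs
    refine le_csSup ⟨M1 + M2, ?_⟩ ⟨s, hs, rfl⟩
    rintro _ ⟨v, hv, rfl⟩
    have h1 := hM1 v (hsub hv)
    have h2 := hM2 v (hsub hv)
    have h3 := abs_sub (l1 v) (l2 v)
    have h4 := abs_sub (u1 v) (u2 v)
    exact max_le (by linarith) (by linarith)
  have b3 : ∀ s ∈ Icc t T, F3 s ≤ sSup (F3 '' Icc t T) := by
    intro s hs
    have hz : MeanContinuous Ps T (fun _ (_ : Ω) => (0:ℝ)) := by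
      refine ⟨fun t _ => ⟨measurable_const, fun P hP => integrable_zero _ _ _, 0, by simp⟩, ?_⟩
      intro t ht
      have : sublinE Ps (fun _ => (0:ℝ)) = 0 :=
        le_antisymm (aux_sup_le hPs fun P hP => by simp) (aux_nonneg fun _ => le_rfl)
      simp only [sub_zero, abs_zero, this]
      exact tendsto_const_nhds
    obtain ⟨N, hN⟩ := aux_bdd hPs hYbar2 hz
    simp only [sub_zero] at hN
    refine le_csSup ⟨M1 + (Ch * (1 + (M1 + Ch + cu * N) / cl) + cu * N), ?_⟩ ⟨s, hs, rfl⟩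
    rintro _ ⟨v, hv, rfl⟩
    have hY := hYbar2.1 v (hsub hv)
    have eL := hL1 v (hsub hv) _ hY
    have eU := hU1 v (hsub hv) _ hY
    simp only [hF3]
    rw [eL, eU, hHb hb2, hHb hb2]
    rw [hHb] at eL eU
    exact max_le (aux_mid hPs hprob hHr1 hHr2 hY v _ _ M1 N eL (hM1 v (hsub hv)).1 (hN v (hsub hv)))
      (aux_mid hPs hprob hHr1 hHr2 hY v _ _ M1 N eU (hM1 v (hsub hv)).2 (hN v (hsub hv)))
  set B : ℝ := sSup (F1 '' Icc t T) + (2 * cu / cl) * sSup (F2 '' Icc t T) +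
    (1 / cl) * (sSup (F3 '' Icc t T) + sSup (F4 '' Icc t T)) with hB
  have hBnn : 0 ≤ B := by positivity
  have hBcl : ∀ v ∈ Icc t T, cu * F2 v + F3 v + F4 v ≤ cl * B := by
    intro v hv
    have e : cl * B = cl * sSup (F1 '' Icc t T) + 2 * cu * sSup (F2 '' Icc t T) +
      (sSup (F3 '' Icc t T) + sSup (F4 '' Icc t T)) := by
      rw [hB]; field_simp
    have := mul_le_mul_of_nonneg_left (b2 v hv) hcu
    have := mul_nonneg hcl.le n1
    have := mul_nonneg hcu n2
    linarith [b3 v hv, b4 v hv]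
  obtain ⟨y1, r1, c1, -, -, m1⟩ := hsol1
  obtain ⟨y2, r2, c2, -, -, m2⟩ := hsol2
  have hφ1 : ∀ v ∈ Icc (0:ℝ) T, sublinE Ps (fun ω => hb1 v ω (Y1 v ω)) =
      sublinE Ps (fun ω => hb1 v ω ((R1 T - R1 v) + Ybar1 v ω)) := by
    intro v hv
    congr 1; funext ω; rw [y1 v hv ω]; congr 1; ring
  have hφ2 : ∀ v ∈ Icc (0:ℝ) T, sublinE Ps (fun ω => hb2 v ω (Y2 v ω)) =
      sublinE Ps (fun ω => hb2 v ω ((R2 T - R2 v) + Ybar2 v ω)) := by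
    intro v hv
    congr 1; funext ω; rw [y2 v hv ω]; congr 1; ring
  have pL : ∀ v ∈ Icc t T, _ := fun v hv => by
    have eL := hL1 v (hsub hv) _ (hYbar2.1 v (hsub hv))
    rw [hHb] at eL
    exact aux_point hPs hprob hHr1 hHr2 (hYbar1.1 v (hsub hv)) (hYbar2.1 v (hsub hv)) v _
      (R1 T - R1 v) (R2 T - R2 v) (l1 v) (l2 v) eL
  have pU : ∀ v ∈ Icc t T, _ := fun v hv => by
    have eU := hU1 v (hsub hv) _ (hYbar2.1 v (hsub hv))
    rw [hHb] at eU
    exact aux_point hPs hprob hHr1 hHr2 (hYbar1.1 v (hsub hv)) (hYbar2.1 v (hsub hv)) v _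
      (R1 T - R1 v) (R2 T - R2 v) (u1 v) (u2 v) eU
  have qL : ∀ v ∈ Icc t T, |l1 v - sublinE Ps (fun ω => hb2 v ω
      ((L1 v (Ybar2 v) - sublinE Ps (Ybar2 v)) + Ybar2 v ω))| ≤ F3 v := by
    intro v hv
    rw [← hHb, ← hL1 v (hsub hv) _ (hYbar2.1 v (hsub hv))]
    exact le_max_left _ _
  have qU : ∀ v ∈ Icc t T, |u1 v - sublinE Ps (fun ω => hb2 v ω
      ((U1 v (Ybar2 v) - sublinE Ps (Ybar2 v)) + Ybar2 v ω))| ≤ F3 v := by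
    intro v hv
    rw [← hHb, ← hU1 v (hsub hv) _ (hYbar2.1 v (hsub hv))]
    exact le_max_right _ _
  have zL : ∀ v, |l1 v - l2 v| ≤ F4 v := fun v => le_max_left _ _
  have zU : ∀ v, |u1 v - u2 v| ≤ F4 v := fun v => le_max_right _ _
  rw [abs_sub_le_iff]
  constructor
  · refine aux_cross c1 c2 m1 m2 ht hBnn fun v hv hD => ?_
    have hv' := hsub hv
    have hD' := mul_lt_mul_of_pos_left hD hcl
    have a1 := r1 v hv'
    have a2 := r2 v hv'
    have hb := hBcl v hv
    simp only [hφ1 v hv', hφ2 v hv'] at a1 a2 ⊢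
    constructor
    · by_contra! hc
      have := (pL v hv).1 hc a2.1
      have := qL v hv
      have := zL v
      linarith
    · by_contra! hc
      have := (pU v hv).1 a1.2 hc
      have := qU v hv
      have := zU v
      linarith
  · refine aux_cross c2 c1 m2 m1 ht hBnn fun v hv hD => ?_
    have hv' := hsub hv
    have hD' := mul_lt_mul_of_pos_left hD hcl
    have a1 := r1 v hv'
    have a2 := r2 v hv'
    have hb := hBcl v hv
    simp only [hφ1 v hv', hφ2 v hv'] at a1 a2 ⊢
    constructor
    · by_contra! hc
      have := (pL v hv).2 a1.1 hc
      have := qL v hv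
      have := zL v
      linarith
    · by_contra! hc
      have := (pU v hv).2 hc a2.2
      have := qU v hv
      have := zU v
      linarith
end

section
/- Let (Ȳ_t)_{t∈[0,T]} be a mean-continuous family of Ê-integrable random variables with l_T ≤ Ê[ħ(T, Ȳ_T)] ≤ u_T, and let (Y, R) = BSP̂_l^u(Ȳ, ħ). Then for every t ∈ [0,T]: |R_T − R_t| ≤ (1 + 2c̄/c̲) sup_{s∈[t,T]} Ê[|Ȳ_s|] + sup_{s∈[t,T]} max( |L_s(0)|, |U_s(0)| ), where L_s(0), U_s(0) are the values of the operators L, U at the zero random variable. -/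
open MeasureTheory Set Filter

section Helpers

variable {Ω : Type*} [MeasurableSpace Ω] {Ps : Set (Measure Ω)}

theorem aux_le_sublinE {X : Ω → ℝ} (hX : EIntegrable Ps X) {P : Measure Ω} (hP : P ∈ Ps) :
    ∫ ω, X ω ∂P ≤ sublinE Ps X := by
  obtain ⟨_, _, M, hM⟩ := hX
  refine le_csSup ⟨M, ?_⟩ ⟨P, hP, rfl⟩
  rintro _ ⟨Q, hQ, rfl⟩
  exact (le_abs_self _).trans (abs_integral_le_integral_abs.trans (hM Q hQ))

theorem aux_zero (hPs : Ps.Nonempty) : sublinE Ps (fun _ => (0:ℝ)) = 0 := by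
  unfold sublinE
  simp [hPs.image_const]

theorem aux_zero_int : EIntegrable Ps (fun _ => (0:ℝ)) :=
  ⟨measurable_const, fun _ _ => integrable_zero _ _ _, 0, fun P _ => by simp⟩

theorem aux_abs {X : Ω → ℝ} (hX : EIntegrable Ps X) : EIntegrable Ps (fun ω => |X ω|) := by
  obtain ⟨h1, h2, M, hM⟩ := hX
  exact ⟨h1.abs, fun P hP => (h2 P hP).abs, M, fun P hP => by simpa using hM P hP⟩

theorem aux_mono (hPs : Ps.Nonempty) (hprob : ∀ P ∈ Ps, IsProbabilityMeasure P)
    {X Y Z : Ω → ℝ} (hX : EIntegrable Ps X) (hY : EIntegrable Ps Y) (hZ : EIntegrable Ps Z)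
    (c k : ℝ) (hk : 0 ≤ k) (h : ∀ ω, X ω ≤ Y ω + c + k * |Z ω|) :
    sublinE Ps X ≤ sublinE Ps Y + c + k * sublinE Ps (fun ω => |Z ω|) := by
  refine csSup_le (hPs.image _) ?_
  rintro _ ⟨P, hP, rfl⟩
  haveI := hprob P hP
  have h1 := aux_le_sublinE hY hP
  have h2 := aux_le_sublinE (aux_abs hZ) hP
  have hYc : Integrable (fun ω => Y ω + c) P := (hY.2.1 P hP).add (integrable_const c)
  have hZk : Integrable (fun ω => k * |Z ω|) P := (hZ.2.1 P hP).abs.const_mul k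
  have h3 : ∫ ω, X ω ∂P ≤ ∫ ω, (Y ω + c + k * |Z ω|) ∂P :=
    integral_mono (hX.2.1 P hP) (hYc.add hZk) h
  rw [integral_add hYc hZk, integral_add (hY.2.1 P hP) (integrable_const c),
    integral_const_mul] at h3
  simp only [integral_const, probReal_univ, smul_eq_mul, one_mul] at h3
  have h4 := mul_le_mul_of_nonneg_left h2 hk
  simp only
  linarith

theorem aux_add_const (hprob : ∀ P ∈ Ps, IsProbabilityMeasure P)
    {X : Ω → ℝ} (hX : EIntegrable Ps X) (a : ℝ) : EIntegrable Ps (fun ω => X ω + a) := by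
  obtain ⟨h1, h2, M, hM⟩ := hX
  refine ⟨h1.add_const a, fun P hP => ?_, M + |a|, fun P hP => ?_⟩
  · haveI := hprob P hP
    exact (h2 P hP).add (integrable_const a)
  · haveI := hprob P hP
    have : ∫ ω, |X ω + a| ∂P ≤ ∫ ω, (|X ω| + |a|) ∂P :=
      integral_mono ((h2 P hP).add (integrable_const a)).abs
        ((h2 P hP).abs.add (integrable_const _)) (fun ω => abs_add_le _ _)
    rw [integral_add (h2 P hP).abs (integrable_const _)] at this
    simp only [integral_const, probReal_univ, smul_eq_mul, one_mul] at this
    linarith [hM P hP]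

theorem aux_sub {X Y : Ω → ℝ} (hX : EIntegrable Ps X) (hY : EIntegrable Ps Y) :
    EIntegrable Ps (fun ω => X ω - Y ω) := by
  obtain ⟨h1, h2, M, hM⟩ := hX
  obtain ⟨g1, g2, N, hN⟩ := hY
  refine ⟨h1.sub g1, fun P hP => (h2 P hP).sub (g2 P hP), M + N, fun P hP => ?_⟩
  have : ∫ ω, |X ω - Y ω| ∂P ≤ ∫ ω, (|X ω| + |Y ω|) ∂P :=
    integral_mono ((h2 P hP).sub (g2 P hP)).abs
      ((h2 P hP).abs.add (g2 P hP).abs) (fun ω => abs_sub _ _)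
  rw [integral_add (h2 P hP).abs (g2 P hP).abs] at this
  linarith [hM P hP, hN P hP]

theorem aux_hb (hprob : ∀ P ∈ Ps, IsProbabilityMeasure P) {T cl cu Ch : ℝ}
    {l u : ℝ → ℝ} {hb : ℝ → Ω → ℝ → ℝ} (hHr : HrAssumption T cl cu Ch l u hb)
    {X : Ω → ℝ} (hX : EIntegrable Ps X) (t : ℝ) :
    EIntegrable Ps (fun ω => hb t ω (X ω)) := by
  obtain ⟨_, _, hCh, _, _, _, _, hmeas, huc, _, hgr, _⟩ := hHr
  obtain ⟨h1, h2, M, hM⟩ := hX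
  have hcont : ∀ ω, Continuous fun y => hb t ω y := by
    intro ω
    rw [Metric.continuous_iff]
    intro y ε hε
    obtain ⟨δ, hδ, h⟩ := huc ε hε
    refine ⟨δ, hδ, fun y' hy' => ?_⟩
    rw [Real.dist_eq] at hy' ⊢
    exact h ω t t y' y (by simpa using hy')
  have hm : Measurable (fun ω => hb t ω (X ω)) := by
    have := measurable_uncurry_of_continuous_of_measurable (u := fun y ω => hb t ω y)
      hcont (hmeas t)
    exact this.comp (h1.prodMk measurable_id)
  have hI : ∀ P ∈ Ps, Integrable (fun ω => Ch * (1 + |X ω|)) P := fun P hP => by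
    haveI := hprob P hP
    exact ((integrable_const (1:ℝ)).add (h2 P hP).abs).const_mul Ch
  have hI2 : ∀ P ∈ Ps, Integrable (fun ω => hb t ω (X ω)) P := fun P hP =>
    (hI P hP).mono' hm.aestronglyMeasurable (ae_of_all _ fun ω => hgr t ω _)
  refine ⟨hm, hI2, Ch * (1 + M), fun P hP => ?_⟩
  haveI := hprob P hP
  have : ∫ ω, |hb t ω (X ω)| ∂P ≤ ∫ ω, Ch * (1 + |X ω|) ∂P :=
    integral_mono (hI2 P hP).abs (hI P hP) (fun ω => hgr t ω _)
  rw [integral_const_mul, integral_add (integrable_const _) (h2 P hP).abs] at this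
  simp only [integral_const, probReal_univ, smul_eq_mul, one_mul] at this
  refine this.trans (mul_le_mul_of_nonneg_left ?_ hCh.le)
  linarith [hM P hP]

theorem aux_incr {T cl cu Ch : ℝ}
    {l u : ℝ → ℝ} {hb : ℝ → Ω → ℝ → ℝ} (hHr : HrAssumption T cl cu Ch l u hb)
    (t : ℝ) (ω : Ω) {x y : ℝ} (hxy : x ≤ y) : hb t ω x + cl * (y - x) ≤ hb t ω y := by
  obtain ⟨_, _, _, _, _, _, _, _, _, hmono, _, hlip⟩ := hHr
  have h1 := (hlip t ω y x).1
  rw [abs_of_nonneg (sub_nonneg.2 hxy),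
    abs_of_nonneg (sub_nonneg.2 ((hmono t ω).monotone hxy))] at h1
  linarith

theorem aux_mean_bdd (hPs : Ps.Nonempty) (hprob : ∀ P ∈ Ps, IsProbabilityMeasure P)
    {T : ℝ} {S : ℝ → Ω → ℝ} (hS : MeanContinuous Ps T S) :
    BddAbove ((fun s => sublinE Ps fun ω => |S s ω|) '' Icc 0 T) := by
  refine isCompact_Icc.bddAbove_image ?_
  intro t ht
  have h0 := hS.2 t ht
  unfold ContinuousWithinAt
  rw [tendsto_iff_dist_tendsto_zero]
  refine squeeze_zero' (Eventually.of_forall fun _ => dist_nonneg) ?_ h0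
  filter_upwards [self_mem_nhdsWithin] with s hs
  have i1 := hS.1 s hs
  have i2 := hS.1 t ht
  have a1 := aux_mono hPs hprob (aux_abs i1) (aux_abs i2) (aux_sub i1 i2) 0 1 zero_le_one
    (fun ω => by linarith [abs_sub_abs_le_abs_sub (S s ω) (S t ω)])
  have a2 := aux_mono hPs hprob (aux_abs i2) (aux_abs i1) (aux_sub i1 i2) 0 1 zero_le_one
    (fun ω => by
      have := abs_sub_abs_le_abs_sub (S t ω) (S s ω)
      rw [abs_sub_comm (S t ω)] at this
      linarith)
  rw [Real.dist_eq, abs_le]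
  constructor <;> linarith

theorem aux_root_bdd (hPs : Ps.Nonempty) (hprob : ∀ P ∈ Ps, IsProbabilityMeasure P)
    {T cl cu Ch : ℝ}
    {l u : ℝ → ℝ} {hb : ℝ → Ω → ℝ → ℝ} (hHr : HrAssumption T cl cu Ch l u hb)
    (t x M : ℝ) (hM : |sublinE Ps (fun ω => hb t ω x)| ≤ M) : |x| ≤ (M + Ch) / cl := by
  have hcl := hHr.1
  have hCh := hHr.2.2.1
  have hgr := hHr.2.2.2.2.2.2.2.2.2.2.1
  have hz : EIntegrable Ps (fun _ : Ω => (0:ℝ)) := aux_zero_int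
  have hx : EIntegrable Ps (fun ω => hb t ω x) := by
    have := aux_hb hprob hHr (aux_add_const hprob hz x) t
    simpa using this
  have hM0 := (abs_nonneg _).trans hM
  have hM1 := abs_le.1 hM
  have hg : ∀ ω, |hb t ω 0| ≤ Ch := fun ω => by simpa using hgr t ω 0
  rw [le_div_iff₀ hcl]
  rcases le_total 0 x with h | h
  · have := aux_mono hPs hprob hz hx hz (Ch - cl * x) 0 le_rfl (fun ω => by
      have := aux_incr hHr t ω h
      have := abs_le.1 (hg ω)
      linarith)
    rw [aux_zero hPs] at this
    rw [abs_of_nonneg h]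
    linarith
  · have := aux_mono hPs hprob hx hz hz (Ch + cl * x) 0 le_rfl (fun ω => by
      have := aux_incr hHr t ω h
      have := abs_le.1 (hg ω)
      linarith)
    rw [aux_zero hPs] at this
    rw [abs_of_nonpos h]
    linarith

end Helpers

/-- a priori bound for the reflecting term of the backward Skorokhod problem
with sublinear expectation:
`|R_T − R_t| ≤ (1 + 2c̄/c̲) sup_{s∈[t,T]} Ê[|Ȳ_s|] + sup_{s∈[t,T]} max(|L_s(0)|, |U_s(0)|)`. -/
theorem stmt11 {Ω : Type*} [MeasurableSpace Ω] (T cl cu Ch : ℝ) (hT : 0 < T)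
    (Ps : Set (Measure Ω)) (hPs : Ps.Nonempty) (hprob : ∀ P ∈ Ps, IsProbabilityMeasure P)
    (l u : ℝ → ℝ) (hb : ℝ → Ω → ℝ → ℝ) (hHr : HrAssumption T cl cu Ch l u hb)
    (L U : ℝ → (Ω → ℝ) → ℝ)
    (hL : ∀ t ∈ Icc (0:ℝ) T, ∀ X : Ω → ℝ, EIntegrable Ps X → Hbar Ps hb t (L t X) X = l t)
    (hU : ∀ t ∈ Icc (0:ℝ) T, ∀ X : Ω → ℝ, EIntegrable Ps X → Hbar Ps hb t (U t X) X = u t)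
    (Ybar : ℝ → Ω → ℝ) (hYbar : MeanContinuous Ps T Ybar)
    (htermL : l T ≤ sublinE Ps fun ω => hb T ω (Ybar T ω))
    (htermU : (sublinE Ps fun ω => hb T ω (Ybar T ω)) ≤ u T)
    (Y : ℝ → Ω → ℝ) (R : ℝ → ℝ) (hsol : IsBSPsol Ps T hb l u Ybar Y R) :
    ∀ t ∈ Icc (0:ℝ) T,
      |R T - R t| ≤
        (1 + 2 * cu / cl) * sSup ((fun s => sublinE Ps fun ω => |Ybar s ω|) '' Icc t T) +
          sSup ((fun s => max |L s (fun _ => 0)| |U s (fun _ => 0)|) '' Icc t T) := by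
  intro t ht
  have hcl := hHr.1
  have hcu := hHr.2.1
  have hz : EIntegrable Ps (fun _ : Ω => (0:ℝ)) := aux_zero_int
  have hL0 : ∀ s ∈ Icc (0:ℝ) T, sublinE Ps (fun ω => hb s ω (L s (fun _ => 0))) = l s := by
    intro s hs
    have := hL s hs _ hz
    unfold Hbar at this
    rw [aux_zero hPs] at this
    simpa using this
  have hU0 : ∀ s ∈ Icc (0:ℝ) T, sublinE Ps (fun ω => hb s ω (U s (fun _ => 0))) = u s := by
    intro s hs
    have := hU s hs _ hz
    unfold Hbar at this
    rw [aux_zero hPs] at this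
    simpa using this
  have hsub : Icc t T ⊆ Icc 0 T := Icc_subset_Icc_left ht.1
  have htt : t ∈ Icc t T := ⟨le_rfl, ht.2⟩
  have hA : (sublinE Ps fun ω => |Ybar t ω|) ≤
      sSup ((fun s => sublinE Ps fun ω => |Ybar s ω|) '' Icc t T) :=
    le_csSup ((aux_mean_bdd hPs hprob hYbar).mono (image_mono hsub)) ⟨t, htt, rfl⟩
  have hB : max |L t (fun _ => 0)| |U t (fun _ => 0)| ≤
      sSup ((fun s => max |L s (fun _ => 0)| |U s (fun _ => 0)|) '' Icc t T) := by
    obtain ⟨M, hM⟩ := hHr.2.2.2.2.2.1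
    refine le_csSup ⟨(M + Ch) / cl, ?_⟩ ⟨t, htt, rfl⟩
    rintro _ ⟨s, hs, rfl⟩
    have hs' := hsub hs
    refine max_le ?_ ?_
    · exact aux_root_bdd hPs hprob hHr s _ M (by rw [hL0 s hs']; exact (hM s hs').1)
    · exact aux_root_bdd hPs hprob hHr s _ M (by rw [hU0 s hs']; exact (hM s hs').2)
  generalize hAe : sSup ((fun s => sublinE Ps fun ω => |Ybar s ω|) '' Icc t T) = A at *
  generalize hBe : sSup ((fun s => max |L s (fun _ => 0)| |U s (fun _ => 0)|) '' Icc t T) = B at *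
  have hL0t := hL0 t ht
  have hU0t := hU0 t ht
  generalize hLt : L t (fun _ => 0) = x at *
  generalize hUt : U t (fun _ => 0) = z at *
  have hYt := hYbar.1 t ht
  have hYe : (fun ω => hb t ω (Y t ω)) = fun ω => hb t ω (Ybar t ω + (R T - R t)) := by
    funext ω
    rw [hsol.1 t ht ω, add_sub_assoc]
  have hbar := hsol.2.1 t ht
  rw [hYe] at hbar
  generalize R T - R t = a at *
  have hlip := hHr.2.2.2.2.2.2.2.2.2.2.2
  have iY := aux_hb hprob hHr (aux_add_const hprob hYt a) t
  have ic : ∀ c : ℝ, EIntegrable Ps (fun ω => hb t ω c) := fun c => by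
    simpa using aux_hb hprob hHr (aux_add_const hprob hz c) t
  have hcu0 : 0 ≤ cu := hcl.le.trans hcu
  have hl : ∀ ω, |hb t ω (Ybar t ω + a) - hb t ω a| ≤ cu * |Ybar t ω| := fun ω => by
    simpa using (hlip t ω (Ybar t ω + a) a).2
  have hE0 : 0 ≤ sublinE Ps fun ω => |Ybar t ω| := by
    obtain ⟨P, hP⟩ := hPs
    exact (integral_nonneg fun ω => abs_nonneg _).trans (aux_le_sublinE (aux_abs hYt) hP)
  generalize hEe : (sublinE Ps fun ω => |Ybar t ω|) = E at *
  have hup : a ≤ z + cu / cl * E := by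
    rcases le_total a z with h | h
    · have : 0 ≤ cu / cl * E := by positivity
      linarith
    · have := aux_mono hPs hprob (ic z) iY hYt (- (cl * (a - z))) cu hcu0 (fun ω => by
        have := aux_incr hHr t ω h
        have := abs_le.1 (hl ω)
        linarith)
      rw [hEe, hU0t] at this
      have h2 : cl * (a - z) ≤ cu * E := by linarith [hbar.2]
      have h3 : a - z ≤ cu * E / cl := by
        rw [le_div_iff₀ hcl]; linarith
      rw [div_mul_eq_mul_div]
      linarith
  have hlo : x - cu / cl * E ≤ a := by
    rcases le_total x a with h | h
    · have : 0 ≤ cu / cl * E := by positivity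
      linarith
    · have := aux_mono hPs hprob iY (ic x) hYt (- (cl * (x - a))) cu hcu0 (fun ω => by
        have := aux_incr hHr t ω h
        have := abs_le.1 (hl ω)
        linarith)
      rw [hEe, hL0t] at this
      have h2 : cl * (x - a) ≤ cu * E := by linarith [hbar.1]
      have h3 : x - a ≤ cu * E / cl := by
        rw [le_div_iff₀ hcl]; linarith
      rw [div_mul_eq_mul_div]
      linarith
  have hq : 0 ≤ cu / cl := by positivity
  have hx := (neg_abs_le x)
  have hz' := (le_abs_self z)
  have hx2 := (le_max_left _ _).trans hB
  have hz2 := (le_max_right _ _).trans hB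
  have hk : cu / cl * E ≤ (1 + 2 * cu / cl) * A := by
    refine mul_le_mul ?_ hA hE0 (by positivity)
    rw [mul_div_assoc]
    linarith
  rw [abs_le]
  constructor <;> linarith
end
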